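/- arXiv:2603.20944 — 2 statements merged into one kernel-verified Lean document; each statement's English description precedes it below -/
import Mathlib

section
/- Let β > 2 and let (α_N) be a sequence with α_N > 0, α_N → 0 and N·α_N → ∞. Then, as N → ∞ through even integers, the pushforward of the Gibbs measure μ_{N,α_N,β} under the map σ ↦ (m₁(σ), m₂(σ)) converges weakly in the space of probability measures on ℝ² to the two-point mixture (1/2)(δ_{(m⁺(β/2), m⁺(β/2))} + δ_{(m⁻(β/2), m⁻(β/2))}). -/
open MeasureTheory Filter

noncomputable section

/-- The spin value ±1 associated to a Boolean. -/
def spinVal (s : Bool) : ℝ := if s then 1 else -1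

/-- A spin configuration on `N = 2n` sites, split into the two blocks
`B₁` (first component) and `B₂` (second component); the perfect matching
pairs the `i`-th spin of `B₁` with the `i`-th spin of `B₂`. -/
abbrev TwoConf (n : ℕ) := (Fin n → Bool) × (Fin n → Bool)

/-- Block magnetization `m₁(σ) = (2/N) ∑_{i ∈ B₁} σᵢ` with `N = 2n`. -/
def mag1 (n : ℕ) (σ : TwoConf n) : ℝ := (2 / (2 * n : ℝ)) * ∑ i, spinVal (σ.1 i)

/-- Block magnetization `m₂(σ) = (2/N) ∑_{i ∈ B₂} σᵢ` with `N = 2n`. -/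
def mag2 (n : ℕ) (σ : TwoConf n) : ℝ := (2 / (2 * n : ℝ)) * ∑ i, spinVal (σ.2 i)

/-- The Hamiltonian
`H_{N,α,β}(σ) = −(β/(2N))(∑_{i,j∈B₁} σᵢσⱼ + ∑_{i,j∈B₂} σᵢσⱼ) − α ∑_{i∈B₁} σᵢ σ_{i+N/2}`
with `N = 2n`. -/
def twoH (n : ℕ) (α β : ℝ) (σ : TwoConf n) : ℝ :=
  -(β / (2 * (2 * n : ℝ))) *
      ((∑ i, ∑ j, spinVal (σ.1 i) * spinVal (σ.1 j)) +
        ∑ i, ∑ j, spinVal (σ.2 i) * spinVal (σ.2 j))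
    - α * ∑ i, spinVal (σ.1 i) * spinVal (σ.2 i)

/-- The distribution of the magnetization vector `(m₁, m₂)` under the Gibbs measure
`μ_{N,α,β}`, i.e. the pushforward of the Gibbs measure under `σ ↦ (m₁(σ), m₂(σ))`. -/
def twoMagDist (n : ℕ) (α β : ℝ) : Measure (ℝ × ℝ) :=
  (∑ σ : TwoConf n, ENNReal.ofReal (Real.exp (-twoH n α β σ)))⁻¹ •
    ∑ σ : TwoConf n,
      ENNReal.ofReal (Real.exp (-twoH n α β σ)) • Measure.dirac (mag1 n σ, mag2 n σ)


theorem aux_hasDerivAt_tanh (x : ℝ) : HasDerivAt Real.tanh (1 / Real.cosh x ^ 2) x := by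
  have h := (Real.hasDerivAt_sinh x).div (Real.hasDerivAt_cosh x) (Real.cosh_pos x).ne'
  have e : Real.tanh = Real.sinh / Real.cosh := by
    funext y; simp [Real.tanh_eq_sinh_div_cosh]
  rw [e]
  refine h.congr_deriv ?_
  congr 1
  have := Real.cosh_sq x
  linarith

def hfun (b x : ℝ) : ℝ := Real.tanh (b * x) - x

theorem aux_hasDerivAt_hfun (b x : ℝ) :
    HasDerivAt (hfun b) (b / Real.cosh (b * x) ^ 2 - 1) x := by
  have h1 : HasDerivAt (fun y : ℝ => b * y) b x := by
    simpa using (hasDerivAt_id x).const_mul b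
  have h := ((aux_hasDerivAt_tanh (b * x)).comp x h1).sub (hasDerivAt_id x)
  exact h.congr_deriv (by ring)

theorem aux_concave (b : ℝ) (hb : 0 < b) : StrictConcaveOn ℝ (Set.Ici 0) (hfun b) := by
  apply StrictAntiOn.strictConcaveOn_of_deriv (convex_Ici 0)
  · exact fun x _ => (aux_hasDerivAt_hfun b x).continuousAt.continuousWithinAt
  · intro x hx y hy hxy
    simp only [interior_Ici, Set.mem_Ioi] at hx hy
    rw [(aux_hasDerivAt_hfun b x).deriv, (aux_hasDerivAt_hfun b y).deriv]
    have h1 : Real.cosh (b * x) < Real.cosh (b * y) := by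
      rw [Real.cosh_lt_cosh, abs_of_pos (by positivity), abs_of_pos (by positivity)]
      exact mul_lt_mul_of_pos_left hxy hb
    have h0 := Real.cosh_pos (b * x)
    gcongr

theorem aux_mp_pos (b : ℝ) (hb : 1 < b) (mp : ℝ)
    (hmax : ∀ z : ℝ, z = Real.tanh (b * z) → z ≤ mp) : 0 < mp := by
  have hd := aux_hasDerivAt_hfun b 0
  have hs := hasDerivAt_iff_tendsto_slope_zero.1 hd
  have hpos : (0:ℝ) < b / Real.cosh (b * 0) ^ 2 - 1 := by simp; linarith
  have h1 := hs.eventually (lt_mem_nhds hpos)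
  have h2 : ∀ᶠ t in nhdsWithin (0:ℝ) (Set.Ioi 0), 0 < t⁻¹ • (hfun b (0 + t) - hfun b 0) :=
    h1.filter_mono (nhdsWithin_mono 0 (fun t (ht : 0 < t) => ht.ne'))
  obtain ⟨t, ht, ht0⟩ := (h2.and self_mem_nhdsWithin).exists
  have ht0 : 0 < t := ht0
  have e0 : hfun b 0 = 0 := by simp [hfun]
  rw [e0, zero_add, sub_zero, smul_eq_mul] at ht
  have ht' : 0 < hfun b t := (pos_iff_pos_of_mul_pos ht).1 (inv_pos.2 ht0)
  have hc : ContinuousOn (hfun b) (Set.Icc t (t + 1)) :=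
    fun x _ => (aux_hasDerivAt_hfun b x).continuousAt.continuousWithinAt
  have hneg : hfun b (t + 1) ≤ 0 := by
    have := Real.tanh_lt_one (b * (t + 1))
    unfold hfun; linarith
  obtain ⟨z, hz, hz0⟩ := intermediate_value_Icc' (by linarith) hc ⟨hneg, ht'.le⟩
  have := hmax z (by unfold hfun at hz0; linarith)
  linarith [hz.1]

def gfun (β v : ℝ) : ℝ := Real.exp (-(β / 4) * v ^ 2) * (2 * Real.cosh (β / 2 * v))

theorem gfun_pos (β v : ℝ) : 0 < gfun β v := by
  unfold gfun; have := Real.cosh_pos (β / 2 * v); positivity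

theorem gfun_abs (β v : ℝ) : gfun β |v| = gfun β v := by
  rcases abs_choice v with h | h <;> rw [h]
  simp [gfun]

theorem aux_hasDerivAt_gfun (β v : ℝ) :
    HasDerivAt (gfun β) (β * Real.exp (-(β / 4) * v ^ 2) * Real.cosh (β / 2 * v)
      * hfun (β / 2) v) v := by
  have h1 : HasDerivAt (fun y : ℝ => β / 2 * y) (β / 2) v := by
    simpa using (hasDerivAt_id v).const_mul (β / 2)
  have h2 : HasDerivAt (fun y : ℝ => -(β / 4) * y ^ 2) (-(β / 4) * (2 * v)) v := by
    simpa using (hasDerivAt_pow 2 v).const_mul (-(β / 4))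
  have h := h2.exp.mul ((h1.cosh).const_mul 2)
  refine h.congr_deriv ?_
  unfold hfun
  rw [Real.tanh_eq_sinh_div_cosh]
  have := (Real.cosh_pos (β / 2 * v)).ne'
  field_simp
  ring

theorem aux_gap (β : ℝ) (hβ : 2 < β) (mp : ℝ)
    (hfix : mp = Real.tanh (β / 2 * mp))
    (hpos : 0 < mp) (δ : ℝ) (hδ : 0 < δ) (hδp : δ < mp) :
    ∃ c : ℝ, 0 < c ∧ c < 1 ∧ ∀ v : ℝ, δ ≤ |(|v| - mp)| → gfun β v ≤ c * gfun β mp := by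
  have hcc := aux_concave (β / 2) (by linarith)
  have e0 : hfun (β / 2) 0 = 0 := by simp [hfun]
  have ep : hfun (β / 2) mp = 0 := by unfold hfun; linarith
  have hin : ∀ x, 0 < x → x < mp → 0 < hfun (β / 2) x := by
    intro x hx hxm
    have := hcc.lt_on_openSegment (x := 0) (y := mp) (z := x) (by simp) hpos.le hpos.ne
      (by rw [openSegment_eq_Ioo hpos]; exact ⟨hx, hxm⟩)
    simpa [e0, ep] using this
  have hout : ∀ x, mp < x → hfun (β / 2) x < 0 := by
    intro x hx
    have := hcc.lt_on_openSegment (x := 0) (y := x) (z := mp) (by simp) (by simp; linarith)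
      (by linarith) (by rw [openSegment_eq_Ioo (by linarith)]; exact ⟨hpos, hx⟩)
    rw [e0, ep, min_lt_iff] at this
    simpa using this
  have hcont : Continuous (gfun β) :=
    continuous_iff_continuousAt.2 fun x => (aux_hasDerivAt_gfun β x).continuousAt
  have hmono : StrictMonoOn (gfun β) (Set.Icc 0 mp) := by
    apply strictMonoOn_of_deriv_pos (convex_Icc 0 mp) hcont.continuousOn
    intro x hx
    rw [interior_Icc] at hx
    rw [(aux_hasDerivAt_gfun β x).deriv]
    have := hin x hx.1 hx.2
    have := Real.cosh_pos (β / 2 * x)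
    positivity
  have hanti : StrictAntiOn (gfun β) (Set.Ici mp) := by
    apply strictAntiOn_of_deriv_neg (convex_Ici mp) hcont.continuousOn
    intro x hx
    rw [interior_Ici] at hx
    rw [(aux_hasDerivAt_gfun β x).deriv]
    have := hout x hx
    have := Real.cosh_pos (β / 2 * x)
    apply mul_neg_of_pos_of_neg _ (hout x hx)
    positivity
  have g0 := gfun_pos β mp
  refine ⟨max (gfun β (mp - δ)) (gfun β (mp + δ)) / gfun β mp, ?_, ?_, ?_⟩
  · have := gfun_pos β (mp - δ)
    have : 0 < max (gfun β (mp - δ)) (gfun β (mp + δ)) := lt_max_of_lt_left this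
    positivity
  · rw [div_lt_one g0, max_lt_iff]
    constructor
    · exact hmono ⟨by linarith, by linarith⟩ ⟨by linarith, le_rfl⟩ (by linarith)
    · exact hanti (by simp) (by simp; linarith) (by linarith)
  · intro v hv
    rw [div_mul_cancel₀ _ g0.ne', ← gfun_abs]
    have hv0 := abs_nonneg v
    rcases le_abs.1 hv with h | h
    · apply le_max_of_le_right
      exact hanti.antitoneOn (by simp; linarith) (by simp; linarith) (by linarith)
    · apply le_max_of_le_left
      exact hmono.monotoneOn ⟨hv0, by linarith⟩ ⟨by linarith, by linarith⟩ (by linarith)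
/-- total spin of a block -/
def totS {n : ℕ} (σ : Fin n → Bool) : ℝ := ∑ i, spinVal (σ i)

/-- block magnetization -/
def mg {n : ℕ} (σ : Fin n → Bool) : ℝ := (2 / (2 * n : ℝ)) * ∑ i, spinVal (σ i)

/-- overlap -/
def ovl {n : ℕ} (σ τ : Fin n → Bool) : ℝ := ∑ i, spinVal (σ i) * spinVal (τ i)

/-- Curie-Weiss weight of a block -/
def qw {n : ℕ} (β : ℝ) (σ : Fin n → Bool) : ℝ := Real.exp (β / 4 * n * mg σ ^ 2)

theorem qw_pos {n : ℕ} (β : ℝ) (σ : Fin n → Bool) : 0 < qw β σ := Real.exp_pos _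

theorem spin_cases (b : Bool) : spinVal b = 1 ∨ spinVal b = -1 := by
  cases b <;> simp [spinVal]

theorem spin_not (b : Bool) : spinVal (!b) = -spinVal b := by
  cases b <;> simp [spinVal]

theorem n_mul_mg {n : ℕ} (hn : 0 < n) (σ : Fin n → Bool) : (n : ℝ) * mg σ = totS σ := by
  have : (n : ℝ) ≠ 0 := by positivity
  unfold mg totS
  field_simp

theorem gibbs_factor {n : ℕ} (hn : 0 < n) (α β : ℝ) (x : TwoConf n) :
    Real.exp (-twoH n α β x) = qw β x.1 * qw β x.2 * Real.exp (α * ovl x.1 x.2) := by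
  unfold qw
  rw [← Real.exp_add, ← Real.exp_add]
  congr 1
  have h0 : (n : ℝ) ≠ 0 := by positivity
  have hs : ∀ σ : Fin n → Bool,
      (∑ i, ∑ j, spinVal (σ i) * spinVal (σ j)) = (n : ℝ) ^ 2 * mg σ ^ 2 := by
    intro σ
    rw [← mul_pow, n_mul_mg hn, totS, pow_two, Finset.sum_mul_sum]
  unfold twoH
  rw [hs, hs]
  unfold ovl
  field_simp
  ring

theorem sum_exp_spin (n : ℕ) (t : ℝ) :
    ∑ σ : Fin n → Bool, Real.exp (t * totS σ) = (2 * Real.cosh t) ^ n := by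
  have h : ∀ σ : Fin n → Bool, Real.exp (t * totS σ) = ∏ i, Real.exp (t * spinVal (σ i)) := by
    intro σ
    rw [← Real.exp_sum, totS, Finset.mul_sum]
  simp_rw [h]
  have := Finset.sum_prod_piFinset (ι := Fin n) (Finset.univ : Finset Bool)
    (fun _ b => Real.exp (t * spinVal b))
  rw [Fintype.piFinset_univ] at this
  rw [this]
  simp [spinVal, Real.cosh_eq]
  congr 1
  ring

theorem sum_tilt {n : ℕ} (hn : 0 < n) (β v : ℝ) :
    ∑ σ : Fin n → Bool, Real.exp (β / 4 * n * (2 * v * mg σ - v ^ 2)) = gfun β v ^ n := by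
  unfold gfun
  rw [mul_pow, ← sum_exp_spin, Finset.mul_sum, ← Real.exp_nat_mul]
  refine Finset.sum_congr rfl fun σ _ => ?_
  rw [← Real.exp_add, ← n_mul_mg hn]
  congr 1
  ring

theorem Z_lower {n : ℕ} (hn : 0 < n) (β v : ℝ) (hβ : 0 < β) :
    gfun β v ^ n ≤ ∑ σ : Fin n → Bool, qw β σ := by
  rw [← sum_tilt hn]
  refine Finset.sum_le_sum fun σ _ => Real.exp_le_exp.2 ?_
  have : 2 * v * mg σ - v ^ 2 ≤ mg σ ^ 2 := by nlinarith [sq_nonneg (mg σ - v)]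
  exact mul_le_mul_of_nonneg_left this (by positivity)

theorem mg_values {n : ℕ} (σ : Fin n → Bool) :
    ∃ k ∈ Finset.range (n + 1), mg σ = (2 / (2 * n : ℝ)) * (2 * (k : ℝ) - n) := by
  refine ⟨(Finset.univ.filter fun i => σ i = true).card, ?_, ?_⟩
  · rw [Finset.mem_range, Nat.lt_succ_iff]
    simpa using Finset.card_filter_le (Finset.univ : Finset (Fin n)) (fun i => σ i = true)
  · unfold mg
    congr 1
    have : ∀ i, spinVal (σ i) = 2 * (if σ i = true then (1:ℝ) else 0) - 1 := by
      intro i; cases σ i <;> simp [spinVal]; norm_num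
    simp_rw [this]
    rw [Finset.sum_sub_distrib, ← Finset.mul_sum]
    simp

theorem Z_bad {n : ℕ} (hn : 0 < n) (β C : ℝ) (bad : ℝ → Prop) [DecidablePred bad]
    (hC : 0 ≤ C) (hbad : ∀ v, bad v → gfun β v ≤ C) :
    ∑ σ : Fin n → Bool, (if bad (mg σ) then qw β σ else 0) ≤ (n + 1) * C ^ n := by
  set V : ℕ → ℝ := fun k => (2 / (2 * n : ℝ)) * (2 * (k : ℝ) - n) with hV
  have h1 : ∀ σ : Fin n → Bool, (if bad (mg σ) then qw β σ else 0) ≤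
      ∑ k ∈ Finset.range (n + 1),
        (if bad (V k) then Real.exp (β / 4 * n * (2 * V k * mg σ - V k ^ 2)) else 0) := by
    intro σ
    obtain ⟨k, hk, e⟩ := mg_values σ
    refine le_trans (le_of_eq ?_) (Finset.single_le_sum
      (f := fun k => if bad (V k) then Real.exp (β / 4 * n * (2 * V k * mg σ - V k ^ 2)) else 0)
      (fun k _ => ?_) hk)
    · have e' : V k = mg σ := e.symm
      simp only [e', qw]
      congr 3
      ring
    · split_ifs
      · positivity
      · exact le_rfl
  calc _ ≤ _ := Finset.sum_le_sum fun σ _ => h1 σ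
    _ = ∑ k ∈ Finset.range (n + 1), ∑ σ : Fin n → Bool,
        (if bad (V k) then Real.exp (β / 4 * n * (2 * V k * mg σ - V k ^ 2)) else 0) :=
      Finset.sum_comm
    _ ≤ ∑ k ∈ Finset.range (n + 1), C ^ n := by
      refine Finset.sum_le_sum fun k _ => ?_
      by_cases hb : bad (V k)
      · simp only [hb, if_true]
        rw [sum_tilt hn]
        exact pow_le_pow_left₀ (gfun_pos _ _).le (hbad _ hb) _
      · simp only [hb, if_false, Finset.sum_const_zero]
        positivity
    _ = (n + 1) * C ^ n := by simp

theorem spin_mul_cases (a b : Bool) : |spinVal a * spinVal b| = 1 := by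
  cases a <;> cases b <;> simp [spinVal]

theorem abs_ovl_le {n : ℕ} (σ τ : Fin n → Bool) : |ovl σ τ| ≤ n := by
  unfold ovl
  refine (Finset.abs_sum_le_sum_abs _ _).trans ?_
  simp_rw [spin_mul_cases]
  simp

/-- swapping two spins -/
def swp {n : ℕ} (i j : Fin n) : (Fin n → Bool) ≃ (Fin n → Bool) :=
  Equiv.arrowCongr (Equiv.swap i j) (Equiv.refl Bool)

theorem swp_apply {n : ℕ} (i j k : Fin n) (τ : Fin n → Bool) :
    swp i j τ k = τ (Equiv.swap i j k) := by
  simp [swp, Equiv.arrowCongr]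

theorem mg_swp {n : ℕ} (i j : Fin n) (τ : Fin n → Bool) : mg (swp i j τ) = mg τ := by
  unfold mg
  congr 1
  simp_rw [swp_apply]
  exact Equiv.sum_comp (Equiv.swap i j) (fun k => spinVal (τ k))

theorem ovl_swp {n : ℕ} (i j : Fin n) (σ τ : Fin n → Bool) :
    |ovl σ (swp i j τ) - ovl σ τ| ≤ 4 := by
  by_cases hij : i = j
  · subst hij
    have : swp i i τ = τ := by funext k; simp [swp_apply]
    simp [this]
  unfold ovl
  rw [← Finset.sum_sub_distrib]
  have : ∀ k ∈ Finset.univ, k ∉ ({i, j} : Finset (Fin n)) →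
      spinVal (σ k) * spinVal (swp i j τ k) - spinVal (σ k) * spinVal (τ k) = 0 := by
    intro k _ hk
    simp only [Finset.mem_insert, Finset.mem_singleton, not_or] at hk
    rw [swp_apply, Equiv.swap_apply_of_ne_of_ne hk.1 hk.2, sub_self]
  rw [← Finset.sum_subset (Finset.subset_univ ({i, j} : Finset (Fin n))) this,
    Finset.sum_pair hij, swp_apply, swp_apply, Equiv.swap_apply_left, Equiv.swap_apply_right]
  rcases spin_cases (σ i) with h1 | h1 <;> rcases spin_cases (σ j) with h2 | h2 <;>
    rcases spin_cases (τ i) with h3 | h3 <;> rcases spin_cases (τ j) with h4 | h4 <;>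
    rw [h1, h2, h3, h4] <;> norm_num

theorem exp_swap_bound (a T T' s : ℝ) (ha : 0 ≤ a) (hT : |T' - T| ≤ 4) (hs : |s| = 1) :
    s * Real.exp (-a * T') ≤ s * Real.exp (-a * T) + (Real.exp (4 * a) - 1) * Real.exp (-a * T) := by
  have e : Real.exp (-a * T') = Real.exp (-a * (T' - T)) * Real.exp (-a * T) := by
    rw [← Real.exp_add]; congr 1; ring
  have hE := Real.exp_pos (-a * T)
  have hab := abs_le.1 hT
  have hup : Real.exp (-a * (T' - T)) ≤ Real.exp (4 * a) :=
    Real.exp_le_exp.2 (by nlinarith)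
  have hlo : Real.exp (-(4 * a)) ≤ Real.exp (-a * (T' - T)) :=
    Real.exp_le_exp.2 (by nlinarith)
  have h2 : 2 ≤ Real.exp (4 * a) + Real.exp (-(4 * a)) := by
    have := Real.add_one_le_exp (4 * a)
    have := Real.add_one_le_exp (-(4 * a))
    linarith
  rw [e, ← mul_assoc, ← add_mul]
  refine mul_le_mul_of_nonneg_right ?_ hE.le
  rcases (abs_eq (by norm_num)).1 hs with h | h <;> rw [h] <;> linarith

/-- the exchangeability estimate -/
theorem exch {n : ℕ} (a : ℝ) (ha : 0 ≤ a) (hn : 0 < n) (G : ℝ → ℝ → ℝ)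
    (hG : ∀ x y, 0 ≤ G x y) :
    ∑ x : TwoConf n, G (mg x.1) (mg x.2) * (n * (mg x.1 * mg x.2 - (Real.exp (4 * a) - 1)))
        * Real.exp (-a * ovl x.1 x.2)
      ≤ ∑ x : TwoConf n, G (mg x.1) (mg x.2) * ovl x.1 x.2 * Real.exp (-a * ovl x.1 x.2) := by
  have key : ∀ i j : Fin n,
      ∑ x : TwoConf n, G (mg x.1) (mg x.2) * (spinVal (x.1 i) * spinVal (x.2 j))
        * Real.exp (-a * ovl x.1 x.2) ≤
      ∑ x : TwoConf n, G (mg x.1) (mg x.2) * (spinVal (x.1 i) * spinVal (x.2 i)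
        + (Real.exp (4 * a) - 1)) * Real.exp (-a * ovl x.1 x.2) := by
    intro i j
    rw [← Equiv.sum_comp ((Equiv.refl (Fin n → Bool)).prodCongr (swp i j))]
    refine Finset.sum_le_sum fun x _ => ?_
    simp only [Equiv.prodCongr_apply, Prod.map_fst, Prod.map_snd, Equiv.refl_apply, mg_swp]
    rw [swp_apply, Equiv.swap_apply_right, mul_assoc (G _ _), mul_assoc (G _ _)]
    refine mul_le_mul_of_nonneg_left ?_ (hG _ _)
    rw [add_mul]
    exact exp_swap_bound a _ _ _ ha (ovl_swp i j x.1 x.2) (spin_mul_cases _ _)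
  have hsum := Finset.sum_le_sum fun (i : Fin n) (_ : i ∈ Finset.univ) =>
    Finset.sum_le_sum fun (j : Fin n) (_ : j ∈ Finset.univ) => key i j
  have hL : ∑ i : Fin n, ∑ j : Fin n,
      ∑ x : TwoConf n, G (mg x.1) (mg x.2) * (spinVal (x.1 i) * spinVal (x.2 j))
        * Real.exp (-a * ovl x.1 x.2) =
      n * ∑ x : TwoConf n, G (mg x.1) (mg x.2) * (n * (mg x.1 * mg x.2))
        * Real.exp (-a * ovl x.1 x.2) := by
    have : ∀ x : TwoConf n, ∑ i : Fin n, ∑ j : Fin n,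
        G (mg x.1) (mg x.2) * (spinVal (x.1 i) * spinVal (x.2 j)) * Real.exp (-a * ovl x.1 x.2)
        = n * (G (mg x.1) (mg x.2) * (n * (mg x.1 * mg x.2)) * Real.exp (-a * ovl x.1 x.2)) := by
      intro x
      simp_rw [← Finset.sum_mul, ← Finset.mul_sum, ← Finset.sum_mul]
      have h1 : ∑ i, spinVal (x.1 i) = n * mg x.1 := (n_mul_mg hn x.1).symm
      have h2 : ∑ i, spinVal (x.2 i) = n * mg x.2 := (n_mul_mg hn x.2).symm
      rw [h1, h2]
      ring
    rw [Finset.mul_sum, ← Finset.sum_congr rfl fun x _ => this x]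
    symm
    rw [Finset.sum_comm]
    refine Finset.sum_congr rfl fun i _ => ?_
    exact Finset.sum_comm
  have hR : ∑ i : Fin n, ∑ j : Fin n,
      ∑ x : TwoConf n, G (mg x.1) (mg x.2) * (spinVal (x.1 i) * spinVal (x.2 i)
        + (Real.exp (4 * a) - 1)) * Real.exp (-a * ovl x.1 x.2) =
      n * ∑ x : TwoConf n, G (mg x.1) (mg x.2) * (ovl x.1 x.2 + n * (Real.exp (4 * a) - 1))
        * Real.exp (-a * ovl x.1 x.2) := by
    simp only [Finset.sum_const, Finset.card_univ, Fintype.card_fin, nsmul_eq_mul]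
    rw [← Finset.mul_sum, Finset.sum_comm]
    congr 1
    refine Finset.sum_congr rfl fun x _ => ?_
    rw [← Finset.sum_mul, ← Finset.mul_sum, Finset.sum_add_distrib]
    simp only [Finset.sum_const, Finset.card_univ, Fintype.card_fin, nsmul_eq_mul, ovl]
  rw [hL, hR] at hsum
  have hn' : (0:ℝ) < n := by exact_mod_cast hn
  have h := le_of_mul_le_mul_left hsum hn'
  rw [← sub_nonneg, ← Finset.sum_sub_distrib] at h ⊢
  refine h.trans (le_of_eq (Finset.sum_congr rfl fun x _ => ?_))
  ring

/-- aligned weight dominates anti-aligned weight -/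
theorem align {n : ℕ} (a d : ℝ) (ha : 0 ≤ a) (hn : 0 < n) (G : ℝ → ℝ → ℝ)
    (hG : ∀ x y, 0 ≤ G x y) (hd : ∀ x y, G x y ≠ 0 → d ≤ x * y) :
    (1 + 2 * a * (n * (d - (Real.exp (4 * a) - 1)))) *
      ∑ x : TwoConf n, G (mg x.1) (mg x.2) * Real.exp (-a * ovl x.1 x.2)
      ≤ ∑ x : TwoConf n, G (mg x.1) (mg x.2) * Real.exp (a * ovl x.1 x.2) := by
  have h1 := exch a ha hn G hG
  have h2 : ∑ x : TwoConf n, G (mg x.1) (mg x.2) * Real.exp (-a * ovl x.1 x.2)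
      + 2 * a * ∑ x : TwoConf n, G (mg x.1) (mg x.2) * ovl x.1 x.2 * Real.exp (-a * ovl x.1 x.2)
      ≤ ∑ x : TwoConf n, G (mg x.1) (mg x.2) * Real.exp (a * ovl x.1 x.2) := by
    rw [Finset.mul_sum, ← Finset.sum_add_distrib]
    refine Finset.sum_le_sum fun x _ => ?_
    have e : Real.exp (a * ovl x.1 x.2) =
        Real.exp (2 * a * ovl x.1 x.2) * Real.exp (-a * ovl x.1 x.2) := by
      rw [← Real.exp_add]; congr 1; ring
    have h3 := Real.add_one_le_exp (2 * a * ovl x.1 x.2)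
    have h4 := mul_le_mul_of_nonneg_right h3 (Real.exp_pos (-a * ovl x.1 x.2)).le
    rw [← e] at h4
    have h5 := mul_le_mul_of_nonneg_left h4 (hG (mg x.1) (mg x.2))
    linarith
  have h6 : (n * (d - (Real.exp (4 * a) - 1))) *
      ∑ x : TwoConf n, G (mg x.1) (mg x.2) * Real.exp (-a * ovl x.1 x.2) ≤
      ∑ x : TwoConf n, G (mg x.1) (mg x.2) * (n * (mg x.1 * mg x.2 - (Real.exp (4 * a) - 1)))
        * Real.exp (-a * ovl x.1 x.2) := by
    rw [Finset.mul_sum]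
    refine Finset.sum_le_sum fun x _ => ?_
    by_cases h0 : G (mg x.1) (mg x.2) = 0
    · simp [h0]
    · have := hd _ _ h0
      have hE := Real.exp_pos (-a * ovl x.1 x.2)
      have h7 : (n : ℝ) * (d - (Real.exp (4 * a) - 1)) ≤
          n * (mg x.1 * mg x.2 - (Real.exp (4 * a) - 1)) := by gcongr
      have h8 := mul_le_mul_of_nonneg_left h7 (mul_nonneg (hG (mg x.1) (mg x.2)) hE.le)
      linarith
  have h9 := mul_le_mul_of_nonneg_left (h6.trans h1) (by positivity : 0 ≤ 2 * a)
  linarith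
/-- flipping all the spins of a block -/
def flp {n : ℕ} : (Fin n → Bool) ≃ (Fin n → Bool) where
  toFun σ := fun i => !(σ i)
  invFun σ := fun i => !(σ i)
  left_inv σ := by funext i; simp
  right_inv σ := by funext i; simp

theorem flp_apply {n : ℕ} (σ : Fin n → Bool) (i : Fin n) : flp σ i = !(σ i) := rfl

theorem mg_flp {n : ℕ} (σ : Fin n → Bool) : mg (flp σ) = -mg σ := by
  simp [mg, flp_apply, spin_not]

theorem qw_flp {n : ℕ} (β : ℝ) (σ : Fin n → Bool) : qw β (flp σ) = qw β σ := by
  simp [qw, mg_flp]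

theorem ovl_flp_right {n : ℕ} (σ τ : Fin n → Bool) : ovl σ (flp τ) = -ovl σ τ := by
  simp [ovl, flp_apply, spin_not]

theorem ovl_flp_left {n : ℕ} (σ τ : Fin n → Bool) : ovl (flp σ) τ = -ovl σ τ := by
  simp [ovl, flp_apply, spin_not]

theorem ovl_comm {n : ℕ} (σ τ : Fin n → Bool) : ovl σ τ = ovl τ σ := by
  simp [ovl, mul_comm]

/-- Gibbs weight -/
def gw {n : ℕ} (a β : ℝ) (x : TwoConf n) : ℝ :=
  qw β x.1 * qw β x.2 * Real.exp (a * ovl x.1 x.2)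

theorem gw_pos {n : ℕ} (a β : ℝ) (x : TwoConf n) : 0 < gw a β x := by
  have := qw_pos β x.1
  have := qw_pos β x.2
  unfold gw; positivity

/-- partition function -/
def pZ (n : ℕ) (a β : ℝ) : ℝ := ∑ x : TwoConf n, gw a β x

theorem pZ_pos (n : ℕ) (a β : ℝ) : 0 < pZ n a β :=
  Finset.sum_pos (fun x _ => gw_pos a β x) Finset.univ_nonempty

theorem bad_one {n : ℕ} (hn : 0 < n) (a β c p : ℝ) (ha : 0 ≤ a) (hβ : 0 < β) (hc : 0 ≤ c)
    (bad : ℝ → Prop) [DecidablePred bad] (hbad : ∀ v, bad v → gfun β v ≤ c * gfun β p) :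
    ∑ x : TwoConf n, (if bad (mg x.1) then gw a β x else 0)
      ≤ (n + 1) * (c * Real.exp (2 * a)) ^ n * pZ n a β := by
  set Q : ℝ := ∑ σ : Fin n → Bool, qw β σ with hQ
  have hQ0 : 0 ≤ Q := Finset.sum_nonneg fun σ _ => (qw_pos β σ).le
  set E : ℝ := Real.exp (a * n) with hE
  have hE0 : 0 < E := Real.exp_pos _
  have g0 := gfun_pos β p
  have hB := Z_bad hn β (c * gfun β p) bad (by positivity) hbad
  have hL := Z_lower hn β p hβ
  rw [mul_pow] at hB
  have h1 : ∑ x : TwoConf n, (if bad (mg x.1) then gw a β x else 0) ≤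
      E * ((∑ σ : Fin n → Bool, (if bad (mg σ) then qw β σ else 0)) * Q) := by
    rw [hQ, Finset.sum_mul_sum, ← Fintype.sum_prod_type', Finset.mul_sum]
    refine Finset.sum_le_sum fun x _ => ?_
    split_ifs
    · unfold gw
      rw [mul_comm E]
      have h1 := qw_pos β x.1
      have h2 := qw_pos β x.2
      refine mul_le_mul_of_nonneg_left ?_ (by positivity)
      exact Real.exp_le_exp.2 (mul_le_mul_of_nonneg_left (abs_le.1 (abs_ovl_le x.1 x.2)).2 ha)
    · simp
  have h2 : Q * Q ≤ E * pZ n a β := by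
    rw [hQ, pZ, Finset.sum_mul_sum, ← Fintype.sum_prod_type', Finset.mul_sum]
    refine Finset.sum_le_sum fun x _ => ?_
    unfold gw
    have h1 := qw_pos β x.1
    have h2 := qw_pos β x.2
    have h3 : 1 ≤ E * Real.exp (a * ovl x.1 x.2) := by
      rw [hE, ← Real.exp_add, Real.one_le_exp_iff]
      have := (abs_le.1 (abs_ovl_le x.1 x.2)).1
      nlinarith
    have h4 := mul_le_mul_of_nonneg_left h3 (mul_pos h1 h2).le
    linarith
  have hcn : 0 ≤ c ^ n := by positivity
  have hEE : (c * Real.exp (2 * a)) ^ n = c ^ n * (E * E) := by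
    rw [mul_pow, ← Real.exp_nat_mul, hE, ← Real.exp_add]
    congr 2
    ring
  calc _ ≤ _ := h1
    _ ≤ E * (((n + 1) * (c ^ n * gfun β p ^ n)) * Q) := by gcongr
    _ ≤ E * (((n + 1) * (c ^ n * Q)) * Q) := by gcongr
    _ = E * (n + 1) * c ^ n * (Q * Q) := by ring
    _ ≤ E * (n + 1) * c ^ n * (E * pZ n a β) := by gcongr
    _ = _ := by rw [hEE]; ring

theorem bad_two {n : ℕ} (hn : 0 < n) (a β c p : ℝ) (ha : 0 ≤ a) (hβ : 0 < β) (hc : 0 ≤ c)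
    (bad : ℝ → Prop) [DecidablePred bad] (hbad : ∀ v, bad v → gfun β v ≤ c * gfun β p) :
    ∑ x : TwoConf n, (if bad (mg x.2) then gw a β x else 0)
      ≤ (n + 1) * (c * Real.exp (2 * a)) ^ n * pZ n a β := by
  refine le_trans (le_of_eq ?_) (bad_one hn a β c p ha hβ hc bad hbad)
  rw [← Equiv.sum_comp (Equiv.prodComm (Fin n → Bool) (Fin n → Bool))]
  refine Finset.sum_congr rfl fun x _ => ?_
  have : gw a β ((Equiv.prodComm (Fin n → Bool) (Fin n → Bool)) x) = gw a β x := by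
    simp only [gw, Equiv.prodComm_apply, Prod.fst_swap, Prod.snd_swap]
    rw [ovl_comm, mul_comm (qw β x.2)]
  rw [this]
  rfl

open Classical in
theorem mis_base {n : ℕ} (hn : 0 < n) (a β δ p : ℝ) (ha : 0 ≤ a) (hδ : δ < p) :
    (1 + 2 * a * (n * ((p - δ) ^ 2 - (Real.exp (4 * a) - 1)))) *
    ∑ x : TwoConf n, (if |mg x.1 - p| < δ ∧ |mg x.2 - p| < δ then gw (-a) β x else 0)
      ≤ pZ n a β := by
  have h := align (n := n) a ((p - δ) ^ 2) ha hn
    (fun u v => if |u - p| < δ ∧ |v - p| < δ then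
      Real.exp (β / 4 * n * u ^ 2) * Real.exp (β / 4 * n * v ^ 2) else 0)
    (by intro u v; split_ifs <;> positivity)
    (by
      intro u v huv
      have : |u - p| < δ ∧ |v - p| < δ := by
        by_contra hc
        exact huv (if_neg hc)
      have h1 := (abs_lt.1 this.1).1
      have h2 := (abs_lt.1 this.2).1
      nlinarith)
  refine le_trans (le_of_eq ?_) (h.trans ?_)
  · congr 1
    refine Finset.sum_congr rfl fun x _ => ?_
    rw [ite_mul, zero_mul]
    rfl
  · refine Finset.sum_le_sum fun x _ => ?_
    rw [ite_mul, zero_mul]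
    split_ifs
    · exact le_rfl
    · exact (gw_pos a β x).le

open Classical in
theorem mis_right {n : ℕ} (hn : 0 < n) (a β δ p : ℝ) (ha : 0 ≤ a) (hδ : δ < p) :
    (1 + 2 * a * (n * ((p - δ) ^ 2 - (Real.exp (4 * a) - 1)))) *
    ∑ x : TwoConf n, (if |mg x.1 - p| < δ ∧ |mg x.2 + p| < δ then gw a β x else 0)
      ≤ pZ n a β := by
  refine le_trans (le_of_eq ?_) (mis_base hn a β δ p ha hδ)
  congr 1
  rw [← Equiv.sum_comp ((Equiv.refl (Fin n → Bool)).prodCongr flp)]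
  refine Finset.sum_congr rfl fun x _ => ?_
  simp only [gw, Equiv.prodCongr_apply, Prod.map_fst, Prod.map_snd, Equiv.refl_apply, mg_flp,
    qw_flp, ovl_flp_right]
  have e : |-mg x.2 + p| = |mg x.2 - p| := by rw [← abs_neg]; congr 1; ring
  rw [e, mul_neg, neg_mul]

open Classical in
theorem mis_left {n : ℕ} (hn : 0 < n) (a β δ p : ℝ) (ha : 0 ≤ a) (hδ : δ < p) :
    (1 + 2 * a * (n * ((p - δ) ^ 2 - (Real.exp (4 * a) - 1)))) *
    ∑ x : TwoConf n, (if |mg x.1 + p| < δ ∧ |mg x.2 - p| < δ then gw a β x else 0)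
      ≤ pZ n a β := by
  refine le_trans (le_of_eq ?_) (mis_base hn a β δ p ha hδ)
  congr 1
  rw [← Equiv.sum_comp (flp.prodCongr (Equiv.refl (Fin n → Bool)))]
  refine Finset.sum_congr rfl fun x _ => ?_
  simp only [gw, Equiv.prodCongr_apply, Prod.map_fst, Prod.map_snd, Equiv.refl_apply, mg_flp,
    qw_flp, ovl_flp_left]
  have e : |-mg x.1 + p| = |mg x.1 - p| := by rw [← abs_neg]; congr 1; ring
  rw [e, mul_neg, neg_mul]

/-- both magnetizations close to the same pure phase -/
def goodP (δ p u v : ℝ) : Prop :=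
  (|u - p| < δ ∧ |v - p| < δ) ∨ (|u + p| < δ ∧ |v + p| < δ)

theorem near_of_not_bad (δ p u : ℝ) (h : ¬ δ ≤ |(|u| - p)|) : |u - p| < δ ∨ |u + p| < δ := by
  rw [not_le] at h
  rcases abs_choice u with e | e <;> rw [e] at h
  · exact Or.inl h
  · right
    have e2 : u + p = -(-u - p) := by ring
    rw [e2, abs_neg]
    exact h

open Classical in
theorem not_good_bound {n : ℕ} (hn : 0 < n) (a β δ p c : ℝ) (ha : 0 ≤ a) (hβ : 0 < β)
    (hc : 0 ≤ c) (hδ : δ < p)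
    (hbad : ∀ v, δ ≤ |(|v| - p)| → gfun β v ≤ c * gfun β p)
    (hK : 0 < 1 + 2 * a * (n * ((p - δ) ^ 2 - (Real.exp (4 * a) - 1)))) :
    ∑ x : TwoConf n, (if goodP δ p (mg x.1) (mg x.2) then 0 else gw a β x) ≤
      (2 * ((n + 1) * (c * Real.exp (2 * a)) ^ n) +
        2 * (1 + 2 * a * (n * ((p - δ) ^ 2 - (Real.exp (4 * a) - 1))))⁻¹) * pZ n a β := by
  have h1 := bad_one hn a β c p ha hβ hc (fun v => δ ≤ |(|v| - p)|) hbad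
  have h2 := bad_two hn a β c p ha hβ hc (fun v => δ ≤ |(|v| - p)|) hbad
  have h3 := mis_right hn a β δ p ha hδ
  have h4 := mis_left hn a β δ p ha hδ
  rw [← le_inv_mul_iff₀ hK] at h3 h4
  have h5 : ∑ x : TwoConf n, (if goodP δ p (mg x.1) (mg x.2) then 0 else gw a β x) ≤
      ∑ x : TwoConf n, (((if δ ≤ |(|mg x.1| - p)| then gw a β x else 0) +
        (if δ ≤ |(|mg x.2| - p)| then gw a β x else 0)) +
        ((if |mg x.1 - p| < δ ∧ |mg x.2 + p| < δ then gw a β x else 0) +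
        (if |mg x.1 + p| < δ ∧ |mg x.2 - p| < δ then gw a β x else 0))) := by
    refine Finset.sum_le_sum fun x _ => ?_
    have hw := gw_pos a β x
    have hi : ∀ (P : Prop) [Decidable P], 0 ≤ (if P then gw a β x else 0) := by
      intro P _; split_ifs
      · exact hw.le
      · exact le_rfl
    by_cases hg : goodP δ p (mg x.1) (mg x.2)
    · rw [if_pos hg]
      exact add_nonneg (add_nonneg (hi _) (hi _)) (add_nonneg (hi _) (hi _))
    rw [if_neg hg]
    by_cases hb1 : δ ≤ |(|mg x.1| - p)|
    · rw [if_pos hb1]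
      linarith [hi (δ ≤ |(|mg x.2| - p)|), hi (|mg x.1 - p| < δ ∧ |mg x.2 + p| < δ),
        hi (|mg x.1 + p| < δ ∧ |mg x.2 - p| < δ)]
    by_cases hb2 : δ ≤ |(|mg x.2| - p)|
    · rw [if_pos hb2]
      linarith [hi (δ ≤ |(|mg x.1| - p)|), hi (|mg x.1 - p| < δ ∧ |mg x.2 + p| < δ),
        hi (|mg x.1 + p| < δ ∧ |mg x.2 - p| < δ)]
    rw [if_neg hb1, if_neg hb2]
    rcases near_of_not_bad _ _ _ hb1 with u | u <;> rcases near_of_not_bad _ _ _ hb2 with v | v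
    · exact absurd (Or.inl ⟨u, v⟩) hg
    · rw [if_pos ⟨u, v⟩]
      linarith [hi (|mg x.1 + p| < δ ∧ |mg x.2 - p| < δ)]
    · rw [if_pos (⟨u, v⟩ : |mg x.1 + p| < δ ∧ |mg x.2 - p| < δ)]
      linarith [hi (|mg x.1 - p| < δ ∧ |mg x.2 + p| < δ)]
    · exact absurd (Or.inr ⟨u, v⟩) hg
  rw [Finset.sum_add_distrib, Finset.sum_add_distrib, Finset.sum_add_distrib] at h5
  linarith

theorem integral_dist {n : ℕ} (hn : 0 < n) (a β : ℝ)
    (f : BoundedContinuousFunction (ℝ × ℝ) ℝ) :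
    ∫ x, f x ∂(twoMagDist n a β) =
      (pZ n a β)⁻¹ * ∑ x : TwoConf n, gw a β x * f (mg x.1, mg x.2) := by
  unfold twoMagDist
  have hi : ∀ y : ℝ × ℝ, Integrable f (Measure.dirac y) := fun y => f.integrable _
  rw [integral_smul_measure, integral_finsetSum_measure]
  · rw [← ENNReal.ofReal_sum_of_nonneg (fun _ _ => (Real.exp_pos _).le), ENNReal.toReal_inv,
      ENNReal.toReal_ofReal (Finset.sum_nonneg fun _ _ => (Real.exp_pos _).le), smul_eq_mul]
    simp_rw [integral_smul_measure, integral_dirac, smul_eq_mul,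
      ENNReal.toReal_ofReal (Real.exp_pos _).le, gibbs_factor hn]
    rfl
  · intro x _
    exact (hi _).smul_measure ENNReal.ofReal_ne_top

theorem sum_symm {n : ℕ} (a β : ℝ) (f : ℝ × ℝ → ℝ) :
    ∑ x : TwoConf n, gw a β x * f (mg x.1, mg x.2) =
      ∑ x : TwoConf n, gw a β x * ((f (mg x.1, mg x.2) + f (-mg x.1, -mg x.2)) / 2) := by
  have h : ∑ x : TwoConf n, gw a β x * f (mg x.1, mg x.2) =
      ∑ x : TwoConf n, gw a β x * f (-mg x.1, -mg x.2) := by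
    rw [← Equiv.sum_comp ((flp (n := n)).prodCongr (flp (n := n)))]
    refine Finset.sum_congr rfl fun x _ => ?_
    simp only [gw, Equiv.prodCongr_apply, Prod.map_fst, Prod.map_snd, mg_flp,
      qw_flp, ovl_flp_left, ovl_flp_right, neg_neg]
  have h2 : ∑ x : TwoConf n, gw a β x * ((f (mg x.1, mg x.2) + f (-mg x.1, -mg x.2)) / 2) =
      (∑ x : TwoConf n, gw a β x * f (mg x.1, mg x.2) +
      ∑ x : TwoConf n, gw a β x * f (-mg x.1, -mg x.2)) / 2 := by
    rw [← Finset.sum_add_distrib, Finset.sum_div]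
    refine Finset.sum_congr rfl fun x _ => ?_
    ring
  rw [h2, ← h]
  ring

open Classical in
theorem expect_close {n : ℕ} (a β δ p ε M ρ : ℝ) (hε : 0 ≤ ε) (F : ℝ → ℝ → ℝ) (L : ℝ)
    (hFM : ∀ u v, |F u v - L| ≤ M)
    (hFg : ∀ u v, goodP δ p u v → |F u v - L| ≤ ε) (hM : 0 ≤ M)
    (hρ : ∑ x : TwoConf n, (if goodP δ p (mg x.1) (mg x.2) then 0 else gw a β x) ≤
      ρ * pZ n a β) :
    |(pZ n a β)⁻¹ * ∑ x : TwoConf n, gw a β x * F (mg x.1) (mg x.2) - L| ≤ ε + M * ρ := by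
  have hZ := pZ_pos n a β
  have e : (pZ n a β)⁻¹ * ∑ x : TwoConf n, gw a β x * F (mg x.1) (mg x.2) - L =
      (pZ n a β)⁻¹ * ∑ x : TwoConf n, gw a β x * (F (mg x.1) (mg x.2) - L) := by
    simp_rw [mul_sub]
    rw [Finset.sum_sub_distrib, ← Finset.sum_mul]
    change _ = (pZ n a β)⁻¹ * (_ - pZ n a β * L)
    field_simp
  rw [e, abs_mul, abs_of_pos (inv_pos.2 hZ), inv_mul_le_iff₀ hZ]
  refine (Finset.abs_sum_le_sum_abs _ _).trans ?_
  have h1 : ∀ x : TwoConf n, |gw a β x * (F (mg x.1) (mg x.2) - L)| ≤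
      ε * gw a β x + M * (if goodP δ p (mg x.1) (mg x.2) then 0 else gw a β x) := by
    intro x
    have hw := gw_pos a β x
    rw [abs_mul, abs_of_pos hw]
    split_ifs with hg
    · have := mul_le_mul_of_nonneg_left (hFg _ _ hg) hw.le
      linarith
    · have := mul_le_mul_of_nonneg_left (hFM (mg x.1) (mg x.2)) hw.le
      have := mul_nonneg hε hw.le
      linarith
  refine (Finset.sum_le_sum fun x _ => h1 x).trans ?_
  rw [Finset.sum_add_distrib, ← Finset.mul_sum, ← Finset.mul_sum]
  have := mul_le_mul_of_nonneg_left hρ hM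
  change ε * pZ n a β + _ ≤ _
  linarith

theorem rho_tendsto (a : ℕ → ℝ) (c d : ℝ) (hc : 0 < c) (hc1 : c < 1) (hd : 0 < d)
    (ha0 : Tendsto a atTop (nhds 0)) (hna : Tendsto (fun n : ℕ => (n : ℝ) * a n) atTop atTop) :
    Tendsto (fun n : ℕ => 1 + 2 * a n * (n * (d - (Real.exp (4 * a n) - 1)))) atTop atTop ∧
    Tendsto (fun n : ℕ => 2 * ((n + 1) * (c * Real.exp (2 * a n)) ^ n) +
        2 * (1 + 2 * a n * (n * (d - (Real.exp (4 * a n) - 1))))⁻¹) atTop (nhds 0) := by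
  have hK : Tendsto (fun n : ℕ => 1 + 2 * a n * (n * (d - (Real.exp (4 * a n) - 1))))
      atTop atTop := by
    have h1 : Tendsto (fun n : ℕ => 2 * (d - (Real.exp (4 * a n) - 1))) atTop
        (nhds (2 * (d - (Real.exp (4 * 0) - 1)))) := by
      refine Tendsto.const_mul 2 (tendsto_const_nhds.sub (Tendsto.sub ?_ tendsto_const_nhds))
      exact (Real.continuous_exp.tendsto _).comp (ha0.const_mul 4)
    have h2 := hna.atTop_mul_pos (by simpa using hd) h1
    refine (tendsto_atTop_add_const_left _ 1 h2).congr fun n => ?_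
    ring
  refine ⟨hK, ?_⟩
  have h3 : Tendsto (fun n : ℕ => ((n : ℝ) + 1) * (c * Real.exp (2 * a n)) ^ n) atTop
      (nhds 0) := by
    set c' := (c + 1) / 2 with hc'
    have hce : Tendsto (fun n : ℕ => c * Real.exp (2 * a n)) atTop
        (nhds (c * Real.exp (2 * 0))) :=
      ((Real.continuous_exp.tendsto _).comp (ha0.const_mul 2)).const_mul c
    have hev : ∀ᶠ n in atTop, c * Real.exp (2 * a n) < c' :=
      hce.eventually (gt_mem_nhds (by simp [hc']; linarith))
    have hlim : Tendsto (fun n : ℕ => ((n : ℝ) + 1) * c' ^ n) atTop (nhds 0) := by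
      have t1 := tendsto_self_mul_const_pow_of_lt_one (r := c') (by linarith) (by linarith)
      have t2 := tendsto_pow_atTop_nhds_zero_of_lt_one (r := c') (by linarith) (by linarith)
      have := t1.add t2
      simp only [add_zero] at this
      exact this.congr fun n => by ring
    refine squeeze_zero' (Eventually.of_forall fun n => by positivity) ?_ hlim
    filter_upwards [hev] with n hn
    gcongr
  have h4 := (h3.const_mul 2).add ((tendsto_inv_atTop_zero.comp hK).const_mul 2)
  simpa using h4

/-- Theorem 1(1): if `β > 2`, `α_N > 0`, `α_N → 0` and `N α_N → ∞`, then the distribution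
of `m^N = (m₁, m₂)` under the Gibbs measure converges weakly to
`(1/2)(δ_{(m⁺(β/2), m⁺(β/2))} + δ_{(m⁻(β/2), m⁻(β/2))})`. -/
theorem two_block_aligned_limit (β : ℝ) (hβ : 2 < β) (mp : ℝ)
    (hfix : mp = Real.tanh (β / 2 * mp))
    (hmax : ∀ z : ℝ, z = Real.tanh (β / 2 * z) → z ≤ mp)
    (α : ℕ → ℝ) (hαpos : ∀ N, 0 < α N)
    (hα0 : Tendsto α atTop (nhds 0))
    (hNα : Tendsto (fun N : ℕ => (N : ℝ) * α N) atTop atTop)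
    (f : BoundedContinuousFunction (ℝ × ℝ) ℝ) :
    Tendsto (fun n : ℕ => ∫ x, f x ∂(twoMagDist n (α (2 * n)) β)) atTop
      (nhds (∫ x, f x ∂((2 : ENNReal)⁻¹ •
        (Measure.dirac ((mp, mp) : ℝ × ℝ) + Measure.dirac ((-mp, -mp) : ℝ × ℝ))))) := by
  have hp := aux_mp_pos (β / 2) (by linarith) mp hmax
  have ha0 : Tendsto (fun n : ℕ => α (2 * n)) atTop (nhds 0) :=
    hα0.comp (tendsto_id.const_mul_atTop' (by norm_num))
  have hna : Tendsto (fun n : ℕ => (n : ℝ) * α (2 * n)) atTop atTop := by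
    have h1 : Tendsto (fun n : ℕ => ((2 * n : ℕ) : ℝ) * α (2 * n)) atTop atTop :=
      hNα.comp (tendsto_id.const_mul_atTop' (by norm_num))
    refine (h1.const_mul_atTop (by norm_num : (0:ℝ) < 1 / 2)).congr fun n => ?_
    push_cast
    ring
  have hlimit : ∫ x, f x ∂((2 : ENNReal)⁻¹ •
        (Measure.dirac ((mp, mp) : ℝ × ℝ) + Measure.dirac ((-mp, -mp) : ℝ × ℝ))) =
      (f (mp, mp) + f (-mp, -mp)) / 2 := by
    rw [integral_smul_measure, integral_add_measure (f.integrable _) (f.integrable _),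
      integral_dirac, integral_dirac, ENNReal.toReal_inv, smul_eq_mul]
    simp
    ring
  rw [hlimit]
  set F : ℝ → ℝ → ℝ := fun u v => (f (u, v) + f (-u, -v)) / 2 with hF
  set L : ℝ := (f (mp, mp) + f (-mp, -mp)) / 2 with hL
  have hFM : ∀ u v, |F u v - L| ≤ 2 * ‖f‖ := by
    intro u v
    have h1 := abs_le.1 (f.norm_coe_le_norm (u, v))
    have h2 := abs_le.1 (f.norm_coe_le_norm (-u, -v))
    have h3 := abs_le.1 (f.norm_coe_le_norm (mp, mp))
    have h4 := abs_le.1 (f.norm_coe_le_norm (-mp, -mp))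
    rw [abs_le]
    constructor <;> simp only [hF, hL] <;> linarith
  have hFcont : Continuous (fun z : ℝ × ℝ => F z.1 z.2) := by
    have := f.continuous
    simp only [hF]
    fun_prop
  have hFneg : ∀ u v, F (-u) (-v) = F u v := by
    intro u v
    simp only [hF, neg_neg]
    ring
  rw [Metric.tendsto_nhds]
  intro ε hε
  obtain ⟨δ₀, hδ₀, hcl⟩ := Metric.continuous_iff.1 hFcont (mp, mp) (ε / 2) (by positivity)
  set δ := min δ₀ (mp / 2) with hδ
  have hδpos : 0 < δ := lt_min hδ₀ (by positivity)
  have hδp : δ < mp := lt_of_le_of_lt (min_le_right _ _) (by linarith)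
  have hnear : ∀ u v, |u - mp| < δ → |v - mp| < δ → |F u v - L| ≤ ε / 2 := by
    intro u v hu hv
    have := hcl (u, v) (by
      rw [Prod.dist_eq, max_lt_iff]
      exact ⟨lt_of_lt_of_le hu (min_le_left _ _), lt_of_lt_of_le hv (min_le_left _ _)⟩)
    exact this.le
  have hFg : ∀ u v, goodP δ mp u v → |F u v - L| ≤ ε / 2 := by
    rintro u v (⟨hu, hv⟩ | ⟨hu, hv⟩)
    · exact hnear u v hu hv
    · rw [← hFneg]
      apply hnear
      · rw [← abs_neg, neg_sub, sub_neg_eq_add, add_comm]; exact hu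
      · rw [← abs_neg, neg_sub, sub_neg_eq_add, add_comm]; exact hv
  obtain ⟨c, hc0, hc1, hgap⟩ := aux_gap β hβ mp hfix hp δ hδpos hδp
  obtain ⟨hK, hρ⟩ := rho_tendsto (fun n => α (2 * n)) c ((mp - δ) ^ 2) hc0 hc1
    (pow_pos (by linarith) 2) ha0 hna
  have hMρ := hρ.const_mul (2 * ‖f‖)
  rw [mul_zero] at hMρ
  filter_upwards [hK.eventually_gt_atTop 0, hMρ.eventually (gt_mem_nhds (half_pos hε)),
    eventually_gt_atTop 0] with n hKn hn1 hn0
  have hb := not_good_bound hn0 (α (2 * n)) β δ mp c (hαpos _).le (by linarith) hc0.le hδp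
    hgap hKn
  have hfin := expect_close (n := n) (α (2 * n)) β δ mp (ε / 2) (2 * ‖f‖) _ (by positivity) F L
    hFM hFg (by positivity) hb
  rw [integral_dist hn0, sum_symm, Real.dist_eq]
  refine lt_of_le_of_lt hfin ?_
  linarith

end
end

section
/- Let β > 2, let (α_N) satisfy α_N > 0 and α_N → 0, let p(N) ∈ (0,1] satisfy N·p(N) → ∞, and assume p(N)·N·α_N → 0. Then the pushforward of the quenched Gibbs measure μ^ε_{N,α_N,β} under σ ↦ (m₁(σ), m₂(σ)) converges in distribution in probability to (1/4)(δ_{(m⁺(β/2), m⁺(β/2))} + δ_{(m⁺(β/2), m⁻(β/2))} + δ_{(m⁻(β/2), m⁺(β/2))} + δ_{(m⁻(β/2), m⁻(β/2))}): for every bounded continuous f : ℝ² → ℝ and every η > 0, the P-probability that the integral of f(m₁,m₂) under μ^ε_{N,α_N,β} differs from the integral of f under this four-point mixture by more than η tends to 0 as N → ∞ through even integers. -/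
open MeasureTheory Filter

noncomputable section

/-- The diluted Hamiltonian
`H^ε_{N,α,β}(σ) = −(β/(2N))(∑_{i,j∈B₁} σᵢσⱼ + ∑_{i,j∈B₂} σᵢσⱼ)
  − α ∑_{i∈B₁} ε_i σᵢ σ_{i+N/2}` with `N = 2n`. -/
def dilH (n : ℕ) (α β : ℝ) (ε : Fin n → Bool) (σ : TwoConf n) : ℝ :=
  -(β / (2 * (2 * n : ℝ))) *
      ((∑ i, ∑ j, spinVal (σ.1 i) * spinVal (σ.1 j)) +
        ∑ i, ∑ j, spinVal (σ.2 i) * spinVal (σ.2 j))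
    - α * ∑ i, (if ε i then (1 : ℝ) else 0) * (spinVal (σ.1 i) * spinVal (σ.2 i))

/-- The distribution of the magnetization vector `(m₁, m₂)` under the quenched Gibbs
measure `μ^ε_{N,α,β}`, i.e. the pushforward of `μ^ε_{N,α,β}` under `σ ↦ (m₁(σ), m₂(σ))`. -/
def dilMagDist (n : ℕ) (α β : ℝ) (ε : Fin n → Bool) : Measure (ℝ × ℝ) :=
  (∑ σ : TwoConf n, ENNReal.ofReal (Real.exp (-dilH n α β ε σ)))⁻¹ •
    ∑ σ : TwoConf n,
      ENNReal.ofReal (Real.exp (-dilH n α β ε σ)) • Measure.dirac (mag1 n σ, mag2 n σ)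

/-- The probability, under i.i.d. Bernoulli(q) dilution variables `(ε_i)_{i ∈ B₁}`,
of a set `A` of dilution configurations. -/
def bernProb (n : ℕ) (q : ℝ) (A : Set (Fin n → Bool)) : ℝ :=
  ∑ ε : Fin n → Bool, A.indicator (fun ε => ∏ i, if ε i then q else 1 - q) ε


theorem aux_tanh_deriv (b x : ℝ) :
    HasDerivAt (fun z => Real.tanh (b * z) - z) (b / Real.cosh (b * x) ^ 2 - 1) x := by
  have h1 : HasDerivAt (fun z : ℝ => b * z) b x := by
    simpa using (hasDerivAt_id x).const_mul b
  have hc : Real.cosh (b * x) ≠ 0 := (Real.cosh_pos _).ne'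
  have h2 := (h1.sinh.div h1.cosh hc).sub (hasDerivAt_id x)
  have h3 : (fun z => Real.tanh (b * z) - z) =
      ((fun z => Real.sinh (b * z)) / (fun z => Real.cosh (b * z))) - id := by
    funext z; simp [Real.tanh_eq_sinh_div_cosh]
  rw [h3]
  refine h2.congr_deriv ?_
  have := Real.cosh_sq (b * x)
  field_simp
  linear_combination b * this

theorem aux_strictConcave (b : ℝ) (hb : 1 < b) :
    StrictConcaveOn ℝ (Set.Ici 0) (fun z => Real.tanh (b * z) - z) := by
  apply StrictAntiOn.strictConcaveOn_of_deriv (convex_Ici 0)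
  · exact fun x _ => (aux_tanh_deriv b x).continuousAt.continuousWithinAt
  · intro x hx y hy hxy
    simp only [interior_Ici, Set.mem_Ioi] at hx hy
    rw [(aux_tanh_deriv b x).deriv, (aux_tanh_deriv b y).deriv]
    have : Real.cosh (b * x) < Real.cosh (b * y) := by
      rw [Real.cosh_lt_cosh, abs_of_pos (by positivity), abs_of_pos (by positivity)]
      gcongr
    have h0 := Real.cosh_pos (b * x)
    gcongr

/-- The rate function. -/
def auxG (b m : ℝ) : ℝ := Real.log (2 * Real.cosh (b * m)) - b * m ^ 2 / 2

theorem auxG_deriv (b x : ℝ) :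
    HasDerivAt (auxG b) (b * (Real.tanh (b * x) - x)) x := by
  have h1 : HasDerivAt (fun z : ℝ => b * z) b x := by
    simpa using (hasDerivAt_id x).const_mul b
  have hc := Real.cosh_pos (b * x)
  have h2 := ((h1.cosh.const_mul 2).log (by positivity)).sub
    (((hasDerivAt_pow 2 x).const_mul b).div_const 2)
  refine HasDerivAt.congr_deriv (f := auxG b) h2 ?_
  rw [Real.tanh_eq_sinh_div_cosh]
  field_simp
  norm_num
  ring

theorem auxG_abs (b m : ℝ) : auxG b |m| = auxG b m := by
  unfold auxG
  rw [sq_abs, ← Real.cosh_abs (b * |m|), ← Real.cosh_abs (b * m), abs_mul, abs_abs, abs_mul]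

theorem auxG_lt (b : ℝ) (hb : 1 < b) (mp : ℝ) (hfix : mp = Real.tanh (b * mp)) (h0 : 0 < mp)
    (x : ℝ) (hx : |x| ≠ mp) : auxG b x < auxG b mp := by
  rw [← auxG_abs b x]
  generalize hy : |x| = y at *
  have hy0 : 0 ≤ y := hy ▸ abs_nonneg x
  have hconc := aux_strictConcave b hb
  have hcont : Continuous (auxG b) :=
    continuous_iff_continuousAt.2 fun z => (auxG_deriv b z).continuousAt
  rcases lt_or_gt_of_ne hx with h | h
  · refine strictMonoOn_of_deriv_pos (convex_Icc 0 mp) hcont.continuousOn ?_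
      ⟨hy0, h.le⟩ ⟨h0.le, le_rfl⟩ h
    intro z hz
    rw [interior_Icc] at hz
    rw [(auxG_deriv b z).deriv]
    have := hconc.slope_anti_adjacent (x := 0) (y := z) (z := mp) (by simp) (by simp [h0.le])
      hz.1 hz.2
    simp only [← hfix, sub_self, mul_zero, Real.tanh_zero, sub_zero, zero_sub] at this
    apply mul_pos (by linarith)
    by_contra hcon
    push Not at hcon
    have h5 : (Real.tanh (b * z) - z) / z ≤ 0 := div_nonpos_of_nonpos_of_nonneg hcon hz.1.le
    have h6 : 0 ≤ -(Real.tanh (b * z) - z) / (mp - z) :=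
      div_nonneg (by linarith) (by linarith [hz.2])
    linarith
  · refine strictAntiOn_of_deriv_neg (convex_Ici mp) hcont.continuousOn ?_
      (Set.mem_Ici.2 le_rfl) (Set.mem_Ici.2 h.le) h
    intro z hz
    rw [interior_Ici] at hz
    have hz : mp < z := hz
    rw [(auxG_deriv b z).deriv]
    have := hconc.slope_anti_adjacent (x := 0) (y := mp) (z := z) (by simp)
      (by simp; linarith) h0 hz
    simp only [← hfix, sub_self, mul_zero, Real.tanh_zero, sub_zero, zero_div] at this
    apply mul_neg_of_pos_of_neg (by linarith)
    by_contra hcon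
    push Not at hcon
    have : 0 ≤ (Real.tanh (b * z) - z) / (z - mp) := div_nonneg hcon (by linarith)
    linarith

theorem auxG_gap (b : ℝ) (hb : 1 < b) (mp : ℝ) (hfix : mp = Real.tanh (b * mp)) (h0 : 0 < mp)
    (δ : ℝ) (hδ : 0 < δ) :
    ∃ c > 0, ∀ x : ℝ, |x| ≤ 1 → δ ≤ |(|x| - mp)| → auxG b x ≤ auxG b mp - c := by
  have hcont : Continuous (auxG b) :=
    continuous_iff_continuousAt.2 fun z => (auxG_deriv b z).continuousAt
  have hK : IsCompact (Set.Icc (-1:ℝ) 1 ∩ {x | δ ≤ |(|x| - mp)|}) :=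
    isCompact_Icc.inter_right (isClosed_le continuous_const (by fun_prop))
  rcases (Set.Icc (-1:ℝ) 1 ∩ {x | δ ≤ |(|x| - mp)|}).eq_empty_or_nonempty with he | hne
  · refine ⟨1, one_pos, fun x hx hxd => ?_⟩
    have : x ∈ (∅ : Set ℝ) := he ▸ ⟨abs_le.1 hx, hxd⟩
    exact this.elim
  · obtain ⟨x₀, hx₀, hmx⟩ := hK.exists_isMaxOn hne hcont.continuousOn
    have hlt := auxG_lt b hb mp hfix h0 x₀ (by
      intro h
      have := hx₀.2
      simp [h] at this
      linarith)
    refine ⟨auxG b mp - auxG b x₀, by linarith, fun x hx hxd => ?_⟩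
    have : auxG b x ≤ auxG b x₀ := hmx ⟨abs_le.1 hx, hxd⟩
    linarith

def cS {n : ℕ} (s : Fin n → Bool) : ℝ := ∑ i, spinVal (s i)

def cwW (b : ℝ) {n : ℕ} (s : Fin n → Bool) : ℝ := Real.exp (b / (2 * n) * cS s ^ 2)

def cwZ (b : ℝ) (n : ℕ) : ℝ := ∑ s : Fin n → Bool, cwW b s

theorem sum_exp_cS (n : ℕ) (t : ℝ) :
    ∑ s : Fin n → Bool, Real.exp (t * cS s) = (2 * Real.cosh t) ^ n := by
  have h := Fintype.prod_sum (fun (_ : Fin n) (x : Bool) => Real.exp (t * spinVal x))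
  have h2 : ∑ x : Bool, Real.exp (t * spinVal x) = 2 * Real.cosh t := by
    simp [spinVal, Real.cosh_eq]
    ring
  rw [h2] at h
  simp only [Finset.prod_const, Finset.card_univ, Fintype.card_fin] at h
  rw [h]
  refine Finset.sum_congr rfl fun s _ => ?_
  rw [← Real.exp_sum, cS, Finset.mul_sum]

theorem exp_auxG (n : ℕ) (b m : ℝ) :
    Real.exp (n * auxG b m) = (2 * Real.cosh (b * m)) ^ n * Real.exp (-(n * b * m ^ 2 / 2)) := by
  have : 0 < 2 * Real.cosh (b * m) := by have := Real.cosh_pos (b * m); positivity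
  rw [auxG, mul_sub, sub_eq_add_neg, Real.exp_add, Real.exp_nat_mul, Real.exp_log this]
  congr 2; ring

theorem cwZ_lower (b : ℝ) (hb : 0 < b) (n : ℕ) (hn : 0 < n) (m : ℝ) :
    Real.exp (n * auxG b m) ≤ cwZ b n := by
  rw [exp_auxG, ← sum_exp_cS, Finset.sum_mul, cwZ]
  refine Finset.sum_le_sum fun s _ => ?_
  rw [← Real.exp_add, cwW, Real.exp_le_exp]
  have hn' : (0:ℝ) < n := by exact_mod_cast hn
  have h : b / (2 * n) * cS s ^ 2 - (b * m * cS s + -(n * b * m ^ 2 / 2))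
      = b / (2 * n) * (cS s - n * m) ^ 2 := by field_simp; ring
  have : 0 ≤ b / (2 * n) * (cS s - n * m) ^ 2 := by positivity
  linarith

theorem cS_count {n : ℕ} (s : Fin n → Bool) :
    ∃ k ∈ Finset.range (n + 1), cS s = 2 * (k : ℝ) - n := by
  refine ⟨(Finset.univ.filter fun i => s i = true).card, ?_, ?_⟩
  · rw [Finset.mem_range]
    have := Finset.card_filter_le (Finset.univ : Finset (Fin n)) (fun i => s i = true)
    simp at this ⊢
    omega
  · have : ∀ i, spinVal (s i) = 2 * (if s i = true then (1:ℝ) else 0) - 1 := by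
      intro i; unfold spinVal; split_ifs <;> norm_num
    simp only [cS, this, Finset.sum_sub_distrib, ← Finset.mul_sum, Finset.sum_boole]
    simp

theorem cS_abs_le {n : ℕ} (s : Fin n → Bool) : |cS s| ≤ n := by
  obtain ⟨k, hk, h⟩ := cS_count s
  have : (k:ℝ) ≤ n := by exact_mod_cast Nat.lt_succ_iff.1 (Finset.mem_range.1 hk)
  have h0 : (0:ℝ) ≤ k := Nat.cast_nonneg k
  rw [h, abs_le]; constructor <;> linarith

/-- Concentration for the Curie-Weiss model. -/
theorem cw_conc (b : ℝ) (hb : 1 < b) (mp : ℝ) (hfix : mp = Real.tanh (b * mp)) (h0 : 0 < mp)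
    (δ : ℝ) (hδ : 0 < δ) :
    ∃ c > 0, ∀ n : ℕ, 0 < n →
      ∑ s : Fin n → Bool, (if δ ≤ |(|cS s / n| - mp)| then cwW b s else 0) ≤
        (n + 1) * Real.exp (-c * n) * cwZ b n := by
  obtain ⟨c, hc, hgap⟩ := auxG_gap b hb mp hfix h0 δ hδ
  refine ⟨c, hc, fun n hn => ?_⟩
  have hn' : (0:ℝ) < n := by exact_mod_cast hn
  set P : ℕ → (Fin n → Bool) → ℝ := fun k s =>
    Real.exp (b * ((2 * (k : ℝ) - n) / n) * cS s) /
      (2 * Real.cosh (b * ((2 * (k : ℝ) - n) / n))) ^ n with hP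
  have hpos : ∀ x : ℝ, 0 < (2 * Real.cosh x) ^ n := fun x => by
    have := Real.cosh_pos x; positivity
  have hP0 : ∀ k s, 0 ≤ P k s := fun k s => div_nonneg (Real.exp_pos _).le (hpos _).le
  have hPsum : ∀ k, ∑ s, P k s = 1 := fun k => by
    simp only [hP]
    rw [← Finset.sum_div, sum_exp_cS, div_self (hpos _).ne']
  have key : ∀ s : Fin n → Bool, (if δ ≤ |(|cS s / n| - mp)| then cwW b s else 0) ≤
      Real.exp (-c * n) * cwZ b n * ∑ k ∈ Finset.range (n + 1), P k s := by
    intro s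
    have hZ : 0 ≤ cwZ b n := Finset.sum_nonneg fun s _ => (Real.exp_pos _).le
    split_ifs with hbad
    · obtain ⟨k, hk, hks⟩ := cS_count s
      have h1 : P k s ≤ ∑ k ∈ Finset.range (n + 1), P k s :=
        Finset.single_le_sum (f := fun k => P k s) (fun k _ => hP0 k s) hk
      have habs : |cS s / n| ≤ 1 := by
        rw [abs_div, abs_of_pos hn', div_le_one hn']; exact cS_abs_le s
      have h2 := hgap _ habs hbad
      have h3 : cwW b s = P k s * Real.exp (n * auxG b (cS s / n)) := by
        simp only [hP]
        rw [exp_auxG, ← hks, div_mul_eq_mul_div, mul_div_assoc, mul_div_right_comm,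
          div_self (hpos _).ne', one_mul, ← Real.exp_add, cwW]
        congr 1
        field_simp
        ring
      have h4 : Real.exp (n * auxG b (cS s / n)) ≤ Real.exp (-c * n) * cwZ b n := by
        calc _ ≤ Real.exp (-c * n + n * auxG b mp) := by
              rw [Real.exp_le_exp]
              have := mul_le_mul_of_nonneg_left h2 hn'.le
              linarith
          _ = Real.exp (-c * n) * Real.exp (n * auxG b mp) := Real.exp_add _ _
          _ ≤ _ := by
              gcongr
              exact cwZ_lower b (by linarith) n hn mp
      rw [h3, mul_comm]
      exact mul_le_mul h4 h1 (hP0 _ _) (by positivity)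
    · exact mul_nonneg (by positivity) (Finset.sum_nonneg fun k _ => hP0 k s)
  refine (Finset.sum_le_sum fun s _ => key s).trans ?_
  rw [← Finset.mul_sum, Finset.sum_comm]
  simp only [hPsum]
  simp
  apply le_of_eq; ring

theorem cS_not {n : ℕ} (s : Fin n → Bool) : cS (fun i => !(s i)) = - cS s := by
  unfold cS
  rw [← Finset.sum_neg_distrib]
  refine Finset.sum_congr rfl fun i _ => ?_
  cases h : s i <;> simp [spinVal, h]

def flipE (n : ℕ) : (Fin n → Bool) ≃ (Fin n → Bool) where
  toFun s := fun i => !(s i)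
  invFun s := fun i => !(s i)
  left_inv s := by funext i; simp
  right_inv s := by funext i; simp

theorem sum_flip (b : ℝ) (n : ℕ) (g : ℝ → ℝ) :
    ∑ s : Fin n → Bool, cwW b s * g (-(cS s / n)) = ∑ s : Fin n → Bool, cwW b s * g (cS s / n) := by
  rw [← Equiv.sum_comp (flipE n)]
  refine Finset.sum_congr rfl fun s _ => ?_
  simp only [flipE, Equiv.coe_fn_mk, cwW, cS_not]
  simp [neg_div]

def symF (f : ℝ × ℝ → ℝ) (x y : ℝ) : ℝ := (f (x, y) + f (x, -y) + f (-x, y) + f (-x, -y)) / 4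

theorem sum_sym (b : ℝ) (n : ℕ) (f : ℝ × ℝ → ℝ) :
    ∑ s : Fin n → Bool, ∑ t : Fin n → Bool, cwW b s * cwW b t * f (cS s / n, cS t / n) =
    ∑ s : Fin n → Bool, ∑ t : Fin n → Bool, cwW b s * cwW b t * symF f (cS s / n) (cS t / n) := by
  have h1 : ∀ g : ℝ × ℝ → ℝ,
      ∑ s : Fin n → Bool, ∑ t : Fin n → Bool, cwW b s * cwW b t * g (cS s / n, -(cS t / n)) =
      ∑ s : Fin n → Bool, ∑ t : Fin n → Bool, cwW b s * cwW b t * g (cS s / n, cS t / n) := by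
    intro g
    refine Finset.sum_congr rfl fun s _ => ?_
    simp only [mul_assoc, ← Finset.mul_sum]
    rw [sum_flip b n (fun y => g (cS s / n, y))]
  have h2 : ∀ g : ℝ × ℝ → ℝ,
      ∑ s : Fin n → Bool, ∑ t : Fin n → Bool, cwW b s * cwW b t * g (-(cS s / n), cS t / n) =
      ∑ s : Fin n → Bool, ∑ t : Fin n → Bool, cwW b s * cwW b t * g (cS s / n, cS t / n) := by
    intro g
    rw [Finset.sum_comm, Finset.sum_comm (f := fun s t => cwW b s * cwW b t * g (cS s / n, cS t / n))]
    refine Finset.sum_congr rfl fun s _ => ?_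
    simp only [mul_comm _ (cwW b s), mul_assoc, ← Finset.mul_sum]
    rw [sum_flip b n (fun y => g (y, cS s / n))]
  have e2 := h1 f
  have e3 := h2 f
  have e4 := h2 (fun z => f (z.1, -z.2))
  simp only at e4
  have : ∑ s : Fin n → Bool, ∑ t : Fin n → Bool, cwW b s * cwW b t * symF f (cS s / n) (cS t / n)
     = (∑ s : Fin n → Bool, ∑ t : Fin n → Bool, cwW b s * cwW b t * f (cS s / n, cS t / n) +
     ∑ s : Fin n → Bool, ∑ t : Fin n → Bool, cwW b s * cwW b t * f (cS s / n, -(cS t / n)) +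
     ∑ s : Fin n → Bool, ∑ t : Fin n → Bool, cwW b s * cwW b t * f (-(cS s / n), cS t / n) +
     ∑ s : Fin n → Bool, ∑ t : Fin n → Bool, cwW b s * cwW b t * f (-(cS s / n), -(cS t / n))) / 4 := by
    simp only [← Finset.sum_add_distrib, Finset.sum_div]
    refine Finset.sum_congr rfl fun s _ => Finset.sum_congr rfl fun t _ => ?_
    unfold symF; ring
  rw [this, e4, e3, e2]
  ring

theorem symF_abs (f : ℝ × ℝ → ℝ) (x y : ℝ) : symF f |x| |y| = symF f x y := by
  unfold symF
  rcases abs_cases x with ⟨h, _⟩ | ⟨h, _⟩ <;> rcases abs_cases y with ⟨h', _⟩ | ⟨h', _⟩ <;>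
    rw [h, h'] <;> simp only [neg_neg] <;> ring

/-- Two-block limit without the interaction. -/
theorem cw_two (b : ℝ) (hb : 1 < b) (mp : ℝ) (hfix : mp = Real.tanh (b * mp)) (h0 : 0 < mp)
    (f : BoundedContinuousFunction (ℝ × ℝ) ℝ) (η : ℝ) (hη : 0 < η) :
    ∀ᶠ n : ℕ in atTop,
      |∑ s : Fin n → Bool, ∑ t : Fin n → Bool,
        cwW b s * cwW b t * (f (cS s / n, cS t / n) - symF f mp mp)| ≤ η * cwZ b n ^ 2 := by
  have hFc : Continuous (fun z : ℝ × ℝ => symF f z.1 z.2) := by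
    unfold symF
    have := f.continuous
    fun_prop
  obtain ⟨δ, hδ, hF⟩ := Metric.continuous_iff.1 hFc (mp, mp) (η / 2) (by positivity)
  obtain ⟨c, hc, hconc⟩ := cw_conc b hb mp hfix h0 δ hδ
  set C := ‖f‖ with hC
  have hC0 : 0 ≤ C := norm_nonneg _
  have hfC : ∀ z, |f z| ≤ C := fun z => f.norm_coe_le_norm z
  have hFC : ∀ x y, |symF f x y| ≤ C := by
    intro x y
    have h1 := abs_le.1 (hfC (x, y))
    have h2 := abs_le.1 (hfC (x, -y))
    have h3 := abs_le.1 (hfC (-x, y))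
    have h4 := abs_le.1 (hfC (-x, -y))
    unfold symF
    rw [abs_le]; constructor <;> linarith
  have hlim : Tendsto (fun n : ℕ => 4 * C * (((n:ℝ) + 1) * Real.exp (-c * n))) atTop (nhds 0) := by
    have h1 : Tendsto (fun x : ℝ => x ^ 1 * Real.exp (-c * x)) atTop (nhds 0) := by
      simpa using tendsto_rpow_mul_exp_neg_mul_atTop_nhds_zero 1 c hc
    have h2 : Tendsto (fun x : ℝ => Real.exp (-c * x)) atTop (nhds 0) := by
      simpa using tendsto_rpow_mul_exp_neg_mul_atTop_nhds_zero 0 c hc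
    have h3 := (((h1.add h2).comp tendsto_natCast_atTop_atTop).const_mul (4 * C))
    simp only [add_zero, mul_zero] at h3
    refine h3.congr fun n => ?_
    simp only [Function.comp]; ring
  filter_upwards [hlim.eventually (gt_mem_nhds (show (0:ℝ) < η / 2 by positivity)),
    eventually_gt_atTop 0] with n hsmall hn
  have hcn := hconc n hn
  set I : (Fin n → Bool) → ℝ := fun s => if δ ≤ |(|cS s / n| - mp)| then cwW b s else 0 with hI
  have hw : ∀ s : Fin n → Bool, 0 < cwW b s := fun s => Real.exp_pos _
  have hIn : ∀ s, 0 ≤ I s := fun s => by simp only [hI]; split_ifs; exacts [(hw s).le, le_rfl]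
  have hrew : ∑ s : Fin n → Bool, ∑ t : Fin n → Bool,
        cwW b s * cwW b t * (f (cS s / n, cS t / n) - symF f mp mp) =
      ∑ s : Fin n → Bool, ∑ t : Fin n → Bool,
        cwW b s * cwW b t * (symF f (cS s / n) (cS t / n) - symF f mp mp) := by
    simp only [mul_sub, Finset.sum_sub_distrib]
    rw [sum_sym]
  rw [hrew]
  have hterm : ∀ s t : Fin n → Bool,
      |cwW b s * cwW b t * (symF f (cS s / n) (cS t / n) - symF f mp mp)| ≤
      (η / 2) * (cwW b s * cwW b t) + 2 * C * (I s * cwW b t + cwW b s * I t) := by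
    intro s t
    have hst : 0 < cwW b s * cwW b t := mul_pos (hw s) (hw t)
    rw [abs_mul, abs_of_pos hst]
    have h2C : |symF f (cS s / n) (cS t / n) - symF f mp mp| ≤ 2 * C := by
      have := abs_le.1 (hFC (cS s / n) (cS t / n))
      have := abs_le.1 (hFC mp mp)
      rw [abs_le]; constructor <;> linarith
    have hm := mul_le_mul_of_nonneg_left h2C hst.le
    have p1 : 0 ≤ η / 2 * (cwW b s * cwW b t) := by positivity
    by_cases hs : δ ≤ |(|cS s / n| - mp)|
    · have : I s = cwW b s := by simp only [hI]; rw [if_pos hs]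
      rw [this]
      have : 0 ≤ 2 * C * (cwW b s * I t) := by have := hIn t; have := hw s; positivity
      linarith
    · by_cases ht : δ ≤ |(|cS t / n| - mp)|
      · have : I t = cwW b t := by simp only [hI]; rw [if_pos ht]
        rw [this]
        have : 0 ≤ 2 * C * (I s * cwW b t) := by have := hIn s; have := hw t; positivity
        linarith
      · push Not at hs ht
        have hd := hF (|cS s / n|, |cS t / n|) (by
          rw [Prod.dist_eq, Real.dist_eq, Real.dist_eq]; exact max_lt hs ht)
        rw [Real.dist_eq] at hd
        simp only [symF_abs] at hd
        have hm2 := mul_le_mul_of_nonneg_left hd.le hst.le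
        have : 0 ≤ 2 * C * (I s * cwW b t + cwW b s * I t) := by
          have := hIn s; have := hIn t; have := hw t; have := hw s; positivity
        linarith
  have hZ : 0 < cwZ b n := Finset.sum_pos (fun s _ => hw s) Finset.univ_nonempty
  calc _ ≤ ∑ s : Fin n → Bool, ∑ t : Fin n → Bool,
        |cwW b s * cwW b t * (symF f (cS s / n) (cS t / n) - symF f mp mp)| :=
        (Finset.abs_sum_le_sum_abs _ _).trans
          (Finset.sum_le_sum fun s _ => Finset.abs_sum_le_sum_abs _ _)
    _ ≤ ∑ s : Fin n → Bool, ∑ t : Fin n → Bool,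
      ((η / 2) * (cwW b s * cwW b t) + 2 * C * (I s * cwW b t + cwW b s * I t)) :=
        Finset.sum_le_sum fun s _ => Finset.sum_le_sum fun t _ => hterm s t
    _ = (η / 2) * cwZ b n ^ 2 + 4 * C * (∑ s, I s) * cwZ b n := by
        simp only [Finset.sum_add_distrib, ← Finset.mul_sum, ← Finset.sum_mul]
        simp only [cwZ]; ring
    _ ≤ (η / 2) * cwZ b n ^ 2 + 4 * C * ((n + 1) * Real.exp (-c * n) * cwZ b n) * cwZ b n := by
        gcongr
    _ = (η / 2) * cwZ b n ^ 2 + (4 * C * ((n + 1) * Real.exp (-c * n))) * cwZ b n ^ 2 := by ring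
    _ ≤ (η / 2) * cwZ b n ^ 2 + (η / 2) * cwZ b n ^ 2 := by gcongr
    _ = _ := by ring

def epsK {n : ℕ} (ε : Fin n → Bool) : ℝ := ∑ i, (if ε i then (1 : ℝ) else 0)

theorem bern_mean (n : ℕ) (q : ℝ) :
    ∑ ε : Fin n → Bool, (∏ i, if ε i then q else 1 - q) * epsK ε = n * q := by
  have h1 : ∀ i : Fin n, ∑ ε : Fin n → Bool,
      (∏ j, if ε j then q else 1 - q) * (if ε i then (1 : ℝ) else 0) = q := by
    intro i
    have h := Fintype.prod_sum (fun (j : Fin n) (x : Bool) =>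
      (if x then q else 1 - q) * (if j = i then (if x then (1:ℝ) else 0) else 1))
    have h2 : ∀ j : Fin n, ∑ x : Bool,
      (if x then q else 1 - q) * (if j = i then (if x then (1:ℝ) else 0) else 1) =
        if j = i then q else 1 := by
      intro j
      by_cases hj : j = i <;> simp [hj]
    simp only [h2] at h
    rw [Finset.prod_ite_eq' Finset.univ i (fun _ => q)] at h
    simp only [Finset.mem_univ, if_true] at h
    refine Eq.trans (Finset.sum_congr rfl fun ε _ => ?_) h.symm
    rw [Finset.prod_mul_distrib,
      Finset.prod_ite_eq' Finset.univ i (fun j => if ε j then (1:ℝ) else 0)]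
    simp
  simp only [epsK, Finset.mul_sum]
  rw [Finset.sum_comm]
  simp only [h1]
  simp

theorem bern_nonneg (n : ℕ) (q : ℝ) (hq : q ∈ Set.Ioc (0 : ℝ) 1) (A : Set (Fin n → Bool)) :
    0 ≤ bernProb n q A := by
  refine Finset.sum_nonneg fun ε _ => Set.indicator_nonneg (fun ε _ => ?_) _
  refine Finset.prod_nonneg fun i _ => ?_
  split_ifs
  · exact hq.1.le
  · linarith [hq.2]

theorem bern_markov (n : ℕ) (q : ℝ) (hq : q ∈ Set.Ioc (0 : ℝ) 1) (A : Set (Fin n → Bool))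
    (a δ : ℝ) (ha : 0 < a) (hδ : 0 < δ) (hA : ∀ ε ∈ A, δ < a * epsK ε) :
    bernProb n q A ≤ a * (n * q) / δ := by
  rw [← bern_mean, Finset.mul_sum, Finset.sum_div, bernProb]
  refine Finset.sum_le_sum fun ε _ => ?_
  have hw : 0 ≤ ∏ i, if ε i then q else 1 - q := by
    refine Finset.prod_nonneg fun i _ => ?_
    split_ifs
    · exact hq.1.le
    · linarith [hq.2]
  have hK : 0 ≤ epsK ε := Finset.sum_nonneg fun i _ => by split_ifs <;> norm_num
  by_cases h : ε ∈ A
  · rw [Set.indicator_of_mem h, le_div_iff₀ hδ]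
    have := mul_le_mul_of_nonneg_left (hA ε h).le hw
    linarith
  · rw [Set.indicator_of_notMem h]
    positivity

def intT {n : ℕ} (α : ℝ) (ε : Fin n → Bool) (σ : TwoConf n) : ℝ :=
  α * ∑ i, (if ε i then (1 : ℝ) else 0) * (spinVal (σ.1 i) * spinVal (σ.2 i))

theorem exp_dilH (n : ℕ) (α β : ℝ) (ε : Fin n → Bool) (σ : TwoConf n) :
    Real.exp (-dilH n α β ε σ) =
      cwW (β / 2) σ.1 * cwW (β / 2) σ.2 * Real.exp (intT α ε σ) := by
  rw [cwW, cwW, ← Real.exp_add, ← Real.exp_add]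
  congr 1
  simp only [dilH, intT, ← Finset.sum_mul_sum, cS]
  ring

theorem intT_le {n : ℕ} (α : ℝ) (hα : 0 < α) (ε : Fin n → Bool) (σ : TwoConf n) :
    |intT α ε σ| ≤ α * epsK ε := by
  rw [intT, abs_mul, abs_of_pos hα, epsK]
  gcongr
  refine (Finset.abs_sum_le_sum_abs _ _).trans (Finset.sum_le_sum fun i _ => ?_)
  unfold spinVal
  split_ifs <;> norm_num

theorem integral_dil (n : ℕ) (α β : ℝ) (ε : Fin n → Bool)
    (f : BoundedContinuousFunction (ℝ × ℝ) ℝ) :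
    ∫ x, f x ∂(dilMagDist n α β ε) =
      (∑ σ : TwoConf n, Real.exp (-dilH n α β ε σ) * f (cS σ.1 / n, cS σ.2 / n)) /
        ∑ σ : TwoConf n, Real.exp (-dilH n α β ε σ) := by
  have hm : ∀ σ : TwoConf n, (mag1 n σ, mag2 n σ) = (cS σ.1 / n, cS σ.2 / n) := by
    intro σ
    have : (2 / (2 * n : ℝ)) = 1 / n := by
      rw [div_mul_eq_div_div, div_self two_ne_zero]
    simp only [mag1, mag2, this, cS]
    ext <;> simp <;> ring
  unfold dilMagDist
  rw [integral_smul_measure, integral_finsetSum_measure]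
  · simp only [integral_smul_measure, integral_dirac, hm, smul_eq_mul, ENNReal.toReal_inv]
    rw [ENNReal.toReal_sum (fun _ _ => ENNReal.ofReal_ne_top)]
    simp only [ENNReal.toReal_ofReal (Real.exp_pos _).le]
    rw [div_eq_inv_mul]
  · intro σ _
    exact (f.integrable _).smul_measure ENNReal.ofReal_ne_top

theorem exp_sub_one_abs (g δ : ℝ) (h : |g| ≤ δ) : |Real.exp g - 1| ≤ Real.exp δ - 1 := by
  obtain ⟨h1, h2⟩ := abs_le.1 h
  have e1 := Real.exp_le_exp.2 h1
  have e2 := Real.exp_le_exp.2 h2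
  have e3 := Real.add_one_le_exp δ
  have e4 := Real.add_one_le_exp (-δ)
  have e5 : Real.exp δ * Real.exp (-δ) = 1 := by rw [← Real.exp_add]; simp
  have e6 := Real.exp_pos δ
  have e7 : 2 ≤ Real.exp δ + Real.exp (-δ) := by
    nlinarith [sq_nonneg (Real.exp δ - Real.exp (-δ)), Real.exp_pos (-δ)]
  rw [abs_le]; constructor <;> linarith

theorem quenched_bound (n : ℕ) (α β : ℝ) (hα : 0 < α) (ε : Fin n → Bool)
    (f : BoundedContinuousFunction (ℝ × ℝ) ℝ) (mp δ η' : ℝ) (hK : α * epsK ε ≤ δ)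
    (hcw : |∑ s : Fin n → Bool, ∑ t : Fin n → Bool,
        cwW (β / 2) s * cwW (β / 2) t * (f (cS s / n, cS t / n) - symF f mp mp)|
          ≤ η' * cwZ (β / 2) n ^ 2) :
    |∫ x, f x ∂(dilMagDist n α β ε) - symF f mp mp| ≤
      Real.exp δ * (2 * ‖f‖ * (Real.exp δ - 1) + η') := by
  rw [integral_dil]
  simp only [exp_dilH]
  set b := β / 2
  set L := symF f mp mp with hL
  set Z := cwZ b n with hZd
  have hfC : ∀ z, |f z| ≤ ‖f‖ := fun z => f.norm_coe_le_norm z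
  have hLC : |L| ≤ ‖f‖ := by
    have h1 := abs_le.1 (hfC (mp, mp))
    have h2 := abs_le.1 (hfC (mp, -mp))
    have h3 := abs_le.1 (hfC (-mp, mp))
    have h4 := abs_le.1 (hfC (-mp, -mp))
    rw [hL, symF, abs_le]; constructor <;> linarith
  have hw : ∀ s : Fin n → Bool, 0 < cwW b s := fun s => Real.exp_pos _
  have hZ : 0 < Z := Finset.sum_pos (fun s _ => hw s) Finset.univ_nonempty
  have hT : ∀ σ, |intT α ε σ| ≤ δ := fun σ => (intT_le α hα ε σ).trans hK
  have hZ2 : ∑ σ : TwoConf n, cwW b σ.1 * cwW b σ.2 = Z ^ 2 := by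
    rw [Fintype.sum_prod_type, sq, hZd, cwZ, Finset.sum_mul_sum]
  set D := ∑ σ : TwoConf n, cwW b σ.1 * cwW b σ.2 * Real.exp (intT α ε σ) with hD
  have hDlow : Real.exp (-δ) * Z ^ 2 ≤ D := by
    rw [← hZ2, Finset.mul_sum, hD]
    refine Finset.sum_le_sum fun σ _ => ?_
    rw [mul_comm]
    have := Real.exp_le_exp.2 (abs_le.1 (hT σ)).1
    have := hw σ.1; have := hw σ.2
    gcongr
  have hD0 : 0 < D := lt_of_lt_of_le (by positivity) hDlow
  have hnum : |∑ σ : TwoConf n, cwW b σ.1 * cwW b σ.2 * Real.exp (intT α ε σ) *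
      (f (cS σ.1 / n, cS σ.2 / n) - L)| ≤ (2 * ‖f‖ * (Real.exp δ - 1) + η') * Z ^ 2 := by
    have hsplit : ∑ σ : TwoConf n, cwW b σ.1 * cwW b σ.2 * Real.exp (intT α ε σ) *
      (f (cS σ.1 / n, cS σ.2 / n) - L) =
      ∑ σ : TwoConf n, cwW b σ.1 * cwW b σ.2 * ((Real.exp (intT α ε σ) - 1) *
      (f (cS σ.1 / n, cS σ.2 / n) - L)) + ∑ s : Fin n → Bool, ∑ t : Fin n → Bool,
        cwW b s * cwW b t * (f (cS s / n, cS t / n) - L) := by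
      rw [← Fintype.sum_prod_type
        (f := fun σ : TwoConf n => cwW b σ.1 * cwW b σ.2 * (f (cS σ.1 / n, cS σ.2 / n) - L)),
        ← Finset.sum_add_distrib]
      refine Finset.sum_congr rfl fun σ _ => ?_
      ring
    rw [hsplit, add_mul]
    refine (abs_add_le _ _).trans (add_le_add ?_ hcw)
    refine (Finset.abs_sum_le_sum_abs _ _).trans ?_
    rw [← hZ2, Finset.mul_sum]
    refine Finset.sum_le_sum fun σ _ => ?_
    have hst : 0 < cwW b σ.1 * cwW b σ.2 := mul_pos (hw _) (hw _)
    rw [abs_mul, abs_of_pos hst, mul_comm, abs_mul]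
    have h1 := exp_sub_one_abs _ _ (hT σ)
    have h2 : |f (cS σ.1 / n, cS σ.2 / n) - L| ≤ 2 * ‖f‖ := by
      have := abs_le.1 (hfC (cS σ.1 / n, cS σ.2 / n))
      have := abs_le.1 hLC
      rw [abs_le]; constructor <;> linarith
    have h3 := mul_le_mul h1 h2 (abs_nonneg _) ((abs_nonneg _).trans h1)
    have h4 := mul_le_mul_of_nonneg_right h3 hst.le
    linarith
  have heq : (∑ σ : TwoConf n, cwW b σ.1 * cwW b σ.2 * Real.exp (intT α ε σ) *
      f (cS σ.1 / n, cS σ.2 / n)) / D - L =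
      (∑ σ : TwoConf n, cwW b σ.1 * cwW b σ.2 * Real.exp (intT α ε σ) *
      (f (cS σ.1 / n, cS σ.2 / n) - L)) / D := by
    simp only [mul_sub, Finset.sum_sub_distrib, ← Finset.sum_mul]
    rw [← hD, sub_div, mul_div_cancel_left₀ _ hD0.ne']
  rw [heq, abs_div, abs_of_pos hD0, div_le_iff₀ hD0]
  refine hnum.trans ?_
  have hB : 0 ≤ 2 * ‖f‖ * (Real.exp δ - 1) + η' := by
    have := (abs_nonneg _).trans hnum
    exact nonneg_of_mul_nonneg_left this (by positivity)
  calc (2 * ‖f‖ * (Real.exp δ - 1) + η') * Z ^ 2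
      = Real.exp δ * (2 * ‖f‖ * (Real.exp δ - 1) + η') * (Real.exp (-δ) * Z ^ 2) := by
        have e5 : Real.exp δ * Real.exp (-δ) = 1 := by rw [← Real.exp_add]; simp
        linear_combination (-(2 * ‖f‖ * (Real.exp δ - 1) + η') * Z ^ 2) * e5
    _ ≤ _ := by gcongr

theorem integral_mix (f : BoundedContinuousFunction (ℝ × ℝ) ℝ) (mp : ℝ) :
    ∫ x, f x ∂((4 : ENNReal)⁻¹ •
      (Measure.dirac ((mp, mp) : ℝ × ℝ) + Measure.dirac ((mp, -mp) : ℝ × ℝ) +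
        Measure.dirac ((-mp, mp) : ℝ × ℝ) + Measure.dirac ((-mp, -mp) : ℝ × ℝ))) =
      symF f mp mp := by
  rw [integral_smul_measure, integral_add_measure (f.integrable _) (f.integrable _),
    integral_add_measure (f.integrable _) (f.integrable _),
    integral_add_measure (f.integrable _) (f.integrable _)]
  simp only [integral_dirac, symF, ENNReal.toReal_inv, smul_eq_mul]
  simp
  ring

/-- Theorem 2(2): if `β > 2`, `α_N ↓ 0`, `N p(N) → ∞` and `p(N) N α_N → 0`, then the
distribution of `m^N` under `μ^ε_{N,α_N,β}` converges in distribution in probability to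
the four-point mixture `(1/4)(δ_{(m⁺,m⁺)} + δ_{(m⁺,m⁻)} + δ_{(m⁻,m⁺)} + δ_{(m⁻,m⁻)})`. -/
theorem diluted_mixed_limit_in_probability (β : ℝ) (hβ : 2 < β) (mp : ℝ)
    (hfix : mp = Real.tanh (β / 2 * mp))
    (hmax : ∀ z : ℝ, z = Real.tanh (β / 2 * z) → z ≤ mp)
    (α : ℕ → ℝ) (hαpos : ∀ N, 0 < α N)
    (hα0 : Tendsto α atTop (nhds 0))
    (p : ℕ → ℝ) (hp : ∀ N, p N ∈ Set.Ioc (0 : ℝ) 1)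
    (hNp : Tendsto (fun N : ℕ => (N : ℝ) * p N) atTop atTop)
    (hpNα : Tendsto (fun N : ℕ => p N * N * α N) atTop (nhds 0))
    (f : BoundedContinuousFunction (ℝ × ℝ) ℝ) (η : ℝ) (hη : 0 < η) :
    Tendsto (fun n : ℕ =>
        bernProb n (p (2 * n))
          {ε : Fin n → Bool |
            η < |(∫ x, f x ∂(dilMagDist n (α (2 * n)) β ε)) -
              ∫ x, f x ∂((4 : ENNReal)⁻¹ •
                (Measure.dirac ((mp, mp) : ℝ × ℝ) + Measure.dirac ((mp, -mp) : ℝ × ℝ) +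
                  Measure.dirac ((-mp, mp) : ℝ × ℝ) + Measure.dirac ((-mp, -mp) : ℝ × ℝ)))|})
      atTop (nhds 0) := by
  have hb : 1 < β / 2 := by linarith
  have hmp := aux_mp_pos (β / 2) hb mp hmax
  have hδex : ∃ δ > 0, Real.exp δ * (2 * ‖f‖ * (Real.exp δ - 1) + η / 2) < η := by
    have hc : Continuous (fun δ : ℝ => Real.exp δ * (2 * ‖f‖ * (Real.exp δ - 1) + η / 2)) := by
      fun_prop
    have ht := hc.tendsto 0
    simp only [Real.exp_zero, sub_self, mul_zero, zero_add, one_mul] at ht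
    have he := (ht.mono_left (nhdsWithin_le_nhds (s := Set.Ioi 0))).eventually
      (gt_mem_nhds (show η / 2 < η by linarith))
    obtain ⟨δ, h1, h2⟩ := (he.and self_mem_nhdsWithin).exists
    exact ⟨δ, h2, h1⟩
  obtain ⟨δ, hδ, hδη⟩ := hδex
  have hcw := cw_two (β / 2) hb mp hfix hmp f (η / 2) (by positivity)
  have hlim : Tendsto (fun n : ℕ => α (2 * n) * (n * p (2 * n)) / δ) atTop (nhds 0) := by
    have h2 : Tendsto (fun n : ℕ => 2 * n) atTop atTop :=
      tendsto_id.const_mul_atTop' (by norm_num)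
    have h3 := (hpNα.comp h2).div_const (2 * δ)
    rw [zero_div] at h3
    refine h3.congr fun n => ?_
    simp only [Function.comp]
    push_cast
    field_simp
  refine tendsto_of_tendsto_of_tendsto_of_le_of_le' tendsto_const_nhds hlim
    (Eventually.of_forall fun n => bern_nonneg n _ (hp _) _) ?_
  filter_upwards [hcw] with n hn
  refine bern_markov n _ (hp _) _ _ δ (hαpos _) hδ fun ε hε => ?_
  by_contra hcon
  push Not at hcon
  have hq := quenched_bound n (α (2 * n)) β (hαpos _) ε f mp δ (η / 2) hcon hn
  rw [Set.mem_ofPred_eq, integral_mix] at hε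
  linarith

end
end
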